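/- Let R1 be a reduced root system spanning V* and let ξ : K → V be a generic linear residual point of R1. Then ξ is rational: for every α ∈ R1, the linear functional K → ℝ, k ↦ α(ξ(k)), is a linear combination with rational coefficients of the evaluation functionals k ↦ k(β) for β ∈ R1. -/

import Mathlib

open Classical

noncomputable section

namespace GenRes

variable (V : Type*) [AddCommGroup V] [Module ℝ V]

/-- a reduced (crystallographic) root system in `V*` spanning `V*`:  a finite set of
nonzero linear functionals on `V`, spanning `V*`, closed under the reflections
associated to the coroots, integral, and reduced -/
structure RedRootSystem where
  roots : Finset (Module.Dual ℝ V)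
  zero_not_mem : (0 : Module.Dual ℝ V) ∉ roots
  spanning : Submodule.span ℝ (roots : Set (Module.Dual ℝ V)) = ⊤
  coroot : Module.Dual ℝ V → V
  coroot_two : ∀ α ∈ roots, α (coroot α) = 2
  reflect_mem : ∀ α ∈ roots, ∀ β ∈ roots, β - β (coroot α) • α ∈ roots
  integral : ∀ α ∈ roots, ∀ β ∈ roots, ∃ z : ℤ, β (coroot α) = (z : ℝ)
  reduced : ∀ α ∈ roots, ∀ c : ℝ, c • α ∈ roots → c = 1 ∨ c = -1

variable {V} (rs : RedRootSystem V)

/-- a parameter function `k : R1 → ℝ` is `W0`-invariant iff it is invariant under all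
the reflections `β ↦ β − β(α∨)α` -/
def Invariant (k : rs.roots → ℝ) : Prop :=
  ∀ α β : rs.roots,
    k ⟨(β : Module.Dual ℝ V) - (β : Module.Dual ℝ V) (rs.coroot α) • (α : Module.Dual ℝ V),
        rs.reflect_mem α α.2 β β.2⟩ = k β

/-- the space `K` of `W0`-invariant parameter functions `R1 → ℝ`, as a submodule of the
space of all functions `R1 → ℝ` -/
def ParamSub : Submodule ℝ (rs.roots → ℝ) where
  carrier := {k | Invariant rs k}
  add_mem' := by
    intro a b ha hb α β
    simp only [Pi.add_apply, ha α β, hb α β]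
  zero_mem' := by intro α β; rfl
  smul_mem' := by
    intro c a ha α β
    simp only [Pi.smul_apply, ha α β]

/-- `ξ ∈ V` is a linear `(R1,k)`-residual point:
`#{α ∈ R1 : α(ξ) = k(α)} = #{α ∈ R1 : α(ξ) = 0} + dim V` -/
def IsLinResidual (k : rs.roots → ℝ) (ξ : V) : Prop :=
  {α : rs.roots | (α : Module.Dual ℝ V) ξ = k α}.ncard =
    {α : rs.roots | (α : Module.Dual ℝ V) ξ = 0}.ncard + Module.finrank ℝ V

/-- a linear map `ξ : K → V` is a generic linear residual point of `R1` if `ξ(k)` is a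
linear `(R1,k)`-residual point for all `k` in a dense open subset of `K` -/
def IsGeneric (ξ : (ParamSub rs) →ₗ[ℝ] V) : Prop :=
  ∃ U : Set (ParamSub rs), IsOpen U ∧ Dense U ∧
    ∀ k ∈ U, IsLinResidual rs (k : rs.roots → ℝ) (ξ k)

/-- the reflection of `V` associated to the root `α`:  `v ↦ v − α(v)·α∨` -/
def reflV (α : Module.Dual ℝ V) : V →ₗ[ℝ] V :=
  LinearMap.id - α.smulRight (rs.coroot α)

/-- the element of the Weyl group `W0` given by a word in the reflections -/
def weylOf (L : List (Module.Dual ℝ V)) : V →ₗ[ℝ] V :=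
  (L.map (fun α => reflV rs α)).prod

/-!
For generic `k` the residual condition at `ξ k` counts linear functionals on `K`: with `ξ* α` for
`k ↦ α (ξ k)` and `ev_α` for `k ↦ k α`, it says `#{α | ξ* α = ev_α} = #{α | ξ* α = 0} + dim V`. On
the other hand every root system `Φ` satisfies `#{α | L α = κ_α} ≤ #{α | L α = 0} + rank Φ` for
`L` linear and `κ` Weyl-invariant, with linearly independent values on roots of different lengths
in the same component. Applied to the roots in the span of `{α | ξ* α = ev_α}`, this shows that
`{α | ξ* α = ev_α}` spans `V*`. Roots spanning `V*` over `ℝ` span all roots over `ℚ`, so every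
`ξ* α` is a rational combination of evaluations.

If `κ` is constant on an irreducible `Φ`, let `h` represent `L` in the Cartan subalgebra of the
semisimple Lie algebra of `Φ`. The generic element `X = ∑ tₐ eₐ` of the `κ`-eigenspace of `ad h` is
nilpotent, and a nilpotent matrix `X` satisfies `tr (∂X * Y) = 0` for every `Y` commuting with it.
So no nonzero combination of the dual root vectors commutes with `X`, and `ad X` embeds their span
into the `0`-eigenspace of `ad h`, of dimension `#{α | L α = 0} + rank Φ`. If `κ` takes two
independent values on `Φ`, the inequality is elementary geometry: it is checked in rank two (`G₂`);
when the roots of one length are pairwise parallel or orthogonal (`B` and `C`, exchanged by passing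
to coroots), by comparing the numbers of short roots at successive levels of `L`; and otherwise
(`F₄`) because the difference of two roots of one length with the same value of `L`, at an angle of
at most 90°, is a multiple of a root on which `L` vanishes.
-/

section TraceOfDerivative

variable {R F J : Type*} [CommRing R] [Field F] [Algebra R F] (D : Derivation R F F)

lemma derivation_map_one : (1 : Matrix J J F).map D = 0 := by
  ext i j
  rw [Matrix.map_apply, Matrix.one_apply]
  split_ifs <;> simp

variable [Fintype J]

lemma derivation_map_mul (A B : Matrix J J F) :
    (A * B).map D = A.map D * B + A * B.map D := by
  ext i j
  simp only [Matrix.map_apply, Matrix.mul_apply, Matrix.add_apply, map_sum,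
    Derivation.leibniz, smul_eq_mul, ← Finset.sum_add_distrib]
  exact Finset.sum_congr rfl fun k _ => by ring

lemma exists_projection_onto_ker (X : Matrix J J F) :
    ∃ p : Matrix J J F, X * p = 0 ∧ ∀ A : Matrix J J F, X * A = 0 → p * A = A := by
  obtain ⟨π, hπ⟩ := X.mulVecLin.ker.exists_isCompl
  let pr : (J → F) →ₗ[F] (J → F) := Submodule.subtype _ ∘ₗ Submodule.projectionOnto _ π hπ
  have ker_pr (v) : X.mulVec (pr v) = 0 := (Submodule.projectionOnto _ π hπ v).2
  have pr_of_ker (v) (hv : X.mulVec v = 0) : pr v = v :=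
    congrArg Subtype.val (Submodule.projectionOnto_apply_left hπ ⟨v, hv⟩)
  refine ⟨LinearMap.toMatrix' pr, Matrix.toLin'.injective ?_,
    fun A hA => Matrix.toLin'.injective ?_⟩
  · refine LinearMap.ext fun v => ?_
    simp [Matrix.toLin'_mul, ker_pr]
  · refine LinearMap.ext fun v => ?_
    have : X.mulVec (A.mulVec v) = 0 := by rw [Matrix.mulVec_mulVec, hA, Matrix.zero_mulVec]
    simp [Matrix.toLin'_mul, pr_of_ker _ this]

variable {X Y p : Matrix J J F}

lemma commute_compress (hXY : Commute X Y) (hXp : X * p = 0) (hYp : p * (Y * p) = Y * p) :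
    Commute ((1 - p) * X) ((1 - p) * Y) := by
  have hXq : X * (1 - p) = X := by rw [mul_sub, hXp, mul_one, sub_zero]
  have hqYq : (1 - p) * Y * (1 - p) = (1 - p) * Y := by
    linear_combination (norm := noncomm_ring) hYp
  calc (1 - p) * X * ((1 - p) * Y) = (1 - p) * (X * (1 - p)) * Y := by noncomm_ring
    _ = (1 - p) * Y * X := by rw [hXq, mul_assoc, hXY.eq, mul_assoc]
    _ = (1 - p) * Y * ((1 - p) * X) := by rw [← mul_assoc, hqYq]

lemma pow_compress (hXp : X * p = 0) (m : ℕ) :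
    ((1 - p) * X) ^ (m + 1) = (1 - p) * X ^ (m + 1) := by
  have hXq : X * (1 - p) = X := by rw [mul_sub, hXp, mul_one, sub_zero]
  induction m with
  | zero => simp only [zero_add, pow_one]
  | succ m ih =>
    rw [pow_succ', ih, mul_assoc, ← mul_assoc X, hXq, ← pow_succ']

lemma trace_derivation_compress (hXY : Commute X Y) (hXp : X * p = 0)
    (hYp : p * (Y * p) = Y * p) :
    ((((1 - p) * X).map D) * ((1 - p) * Y)).trace = (X.map D * Y).trace := by
  have hXq : X * (1 - p) = X := by rw [mul_sub, hXp, mul_one, sub_zero]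
  have hdp : X * p.map D = - (X.map D * p) := by
    rw [eq_neg_iff_add_eq_zero, add_comm, ← derivation_map_mul, hXp]
    ext; simp
  have hdq : (1 - p).map D = -p.map D := by
    rw [← zero_sub, ← derivation_map_one D]
    ext; simp
  have from_p : (p.map D * X * ((1 - p) * Y)).trace = -(X.map D * (p * Y)).trace :=
    calc (p.map D * X * ((1 - p) * Y)).trace = (p.map D * Y * X).trace := by
          rw [mul_assoc, ← mul_assoc X, hXq, hXY.eq, mul_assoc]
      _ = (X * p.map D * Y).trace := by rw [Matrix.trace_mul_comm, mul_assoc]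
      _ = _ := by rw [hdp, neg_mul, Matrix.trace_neg, mul_assoc]
  have from_q : ((1 - p) * X.map D * ((1 - p) * Y)).trace = (X.map D * ((1 - p) * Y)).trace := by
    have hqYq : (1 - p) * Y * (1 - p) = (1 - p) * Y := by
      linear_combination (norm := noncomm_ring) hYp
    rw [mul_assoc, Matrix.trace_mul_comm, mul_assoc, hqYq]
  rw [derivation_map_mul, hdq, add_mul, Matrix.trace_add, from_q, neg_mul, neg_mul,
    Matrix.trace_neg, from_p, neg_neg, ← Matrix.trace_add, ← mul_add]
  congr 2
  noncomm_ring

theorem trace_derivation_mul_eq_zero (hX : IsNilpotent X) (hXY : Commute X Y) :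
    (X.map D * Y).trace = 0 := by
  obtain ⟨m, hm⟩ : ∃ m, X ^ (m + 1) = 0 := hX.imp fun m hm => by rw [pow_succ, hm, zero_mul]
  clear hX
  induction m generalizing X Y with
  | zero =>
    have : X.map D = 0 := by ext; simp [show X = 0 by simpa using hm]
    rw [this, zero_mul, Matrix.trace_zero]
  | succ m ih =>
    obtain ⟨p, hXp, hp⟩ := exists_projection_onto_ker X
    have hYp : p * (Y * p) = Y * p := hp _ (by rw [← mul_assoc, hXY.eq, mul_assoc, hXp, mul_zero])
    have hpX : p * X ^ (m + 1) = X ^ (m + 1) := hp _ (by rw [← pow_succ', hm])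
    rw [← trace_derivation_compress D hXY hXp hYp]
    refine ih (commute_compress hXY hXp hYp) ?_
    rw [pow_compress hXp, sub_mul, one_mul, hpX, sub_self]

end TraceOfDerivative

section GenericElement

attribute [local instance] LieRing.ofAssociativeRing

lemma exists_derivation_extending {R S T : Type*} [CommRing R] [CommRing S] [CommRing T]
    [Algebra R S] [Algebra R T] [Algebra S T] [IsScalarTower R S T] [Algebra.FormallyEtale S T]
    (d : Derivation R S T) : ∃ D : Derivation R T T, ∀ s, D (algebraMap S T s) = d s := by
  let base := KaehlerDifferential.isBaseChange_of_formallyEtale R S T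
  refine ⟨(base.lift d.liftKaehlerDifferential).compDer (KaehlerDifferential.D R T), fun s => ?_⟩
  have := base.lift_eq d.liftKaehlerDifferential (KaehlerDifferential.D R S s)
  rwa [KaehlerDifferential.map_D, Derivation.liftKaehlerDifferential_comp_D] at this

lemma exists_partial_derivative (K P : Type*) [Field K] (a : P) :
    ∃ D : Derivation K (FractionRing (MvPolynomial P K)) (FractionRing (MvPolynomial P K)),
      ∀ b, D (algebraMap (MvPolynomial P K) _ (.X b)) = if a = b then 1 else 0 := by
  have := Algebra.FormallyEtale.of_isLocalization (Rₘ := FractionRing (MvPolynomial P K))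
    (nonZeroDivisors (MvPolynomial P K))
  obtain ⟨D, hD⟩ := exists_derivation_extending
    (MvPolynomial.mkDerivation K (A := FractionRing (MvPolynomial P K))
      fun b => if a = b then 1 else 0)
  exact ⟨D, fun b => by rw [hD, MvPolynomial.mkDerivation_X]⟩

lemma isNilpotent_of_lie_eq_smul {J F : Type*} [Fintype J] [Field F] [CharZero F]
    {H X : Matrix J J F} {κ : F} (hκ : κ ≠ 0) (h : ⁅H, X⁆ = κ • X) : IsNilpotent X := by
  have lie_pow (n : ℕ) : ⁅H, X ^ n⁆ = (n * κ) • X ^ n := by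
    induction n with
    | zero => simp [Ring.lie_def]
    | succ n ih =>
      have : ⁅H, X ^ (n + 1)⁆ = ⁅H, X ^ n⁆ * X + X ^ n * ⁅H, X⁆ := by
        simp only [Ring.lie_def, pow_succ]; noncomm_ring
      rw [this, ih, h, smul_mul_assoc, mul_smul_comm, ← pow_succ, ← add_smul]
      push_cast
      ring_nf
  by_contra hX
  have eigen (n : ℕ) : (LieAlgebra.ad F _ H).HasEigenvalue (n * κ) :=
    Module.End.hasEigenvalue_of_hasEigenvector
      ⟨Module.End.mem_eigenspace_iff.mpr (lie_pow n), fun h0 => hX ⟨n, h0⟩⟩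
  have inj : Function.Injective fun n : ℕ => (n * κ : F) := fun m n hmn => by
    simpa [hκ] using hmn
  exact Set.infinite_of_injective_forall_mem inj eigen
    (Module.End.finite_hasEigenvalue (LieAlgebra.ad F _ H))

variable {J K F P : Type*} [Field K] [Field F] [Algebra K F] [Fintype P]

variable (F) in
/-- The `F`-linear combinations `∑ tₐ eₐ` of matrices `eₐ` over a subfield `K` of `F`; for
independent transcendentals `tₐ` this is the generic element of the span of the `eₐ`. -/
def extCombination (e : P → Matrix J J K) : (P → F) →ₗ[F] Matrix J J F :=
  Fintype.linearCombination F fun a => (e a).map (algebraMap K F)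

lemma extCombination_apply (e : P → Matrix J J K) (t : P → F) :
    extCombination F e t = ∑ a, t a • (e a).map (algebraMap K F) :=
  Fintype.linearCombination_apply F _ t

lemma map_derivation_extCombination (e : P → Matrix J J K) {t : P → F} {a : P}
    {D : Derivation K F F} (hD : ∀ b, D (t b) = if a = b then 1 else 0) :
    (extCombination F e t).map D = (e a).map (algebraMap K F) := by
  ext i j
  simp [extCombination_apply, Matrix.sum_apply, hD]

lemma finrank_span_map_le [Finite J] (S : Submodule K (Matrix J J K)) :
    Module.finrank F (Submodule.span F ((·.map (algebraMap K F)) '' (S : Set (Matrix J J K)))) ≤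
      Module.finrank K S := by
  let toF : Matrix J J K →ₗ[K] Matrix J J F := (Algebra.linearMap K F).mapMatrix
  let basis := Module.finBasis K S
  let images : Set (Matrix J J F) := Set.range fun s => toF (basis s)
  have le : Submodule.span F ((·.map (algebraMap K F)) '' (S : Set (Matrix J J K))) ≤
      Submodule.span F images := by
    rw [Submodule.span_le]
    rintro _ ⟨A, hA, rfl⟩
    have h := congrArg (toF ∘ Subtype.val) (basis.sum_repr ⟨A, hA⟩)
    simp only [Function.comp_apply, Submodule.coe_sum, Submodule.coe_smul, map_sum, map_smul] at h
    change toF A ∈ Submodule.span F images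
    rw [← h]
    refine Submodule.sum_mem _ fun s _ => ?_
    rw [← algebraMap_smul F]
    exact Submodule.smul_mem _ _ (Submodule.subset_span ⟨s, rfl⟩)
  have := Module.Finite.span_of_finite F (Set.finite_range fun s => toF (basis s))
  exact (Submodule.finrank_mono le).trans ((finrank_range_le_card _).trans (by simp))

variable [Fintype J]

lemma trace_mul_extCombination {e f : P → Matrix J J K}
    (dual : ∀ a b, (e a * f b).trace = if a = b then 1 else 0) (y : P → F) (a : P) :
    ((e a).map (algebraMap K F) * extCombination F f y).trace = y a := by
  have trace_map (b) : ((e a).map (algebraMap K F) * (f b).map (algebraMap K F)).trace =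
      algebraMap K F (if a = b then 1 else 0) := by
    rw [← dual, ← Matrix.map_mul, AddMonoidHom.map_trace]
  simp [extCombination_apply, Finset.mul_sum, Matrix.trace_sum, trace_map]

lemma lie_map_algebraMap (A B : Matrix J J K) :
    ⁅A.map (algebraMap K F), B.map (algebraMap K F)⁆ = ⁅A, B⁆.map (algebraMap K F) := by
  simp only [Ring.lie_def, ← Matrix.map_mul]
  exact (Matrix.map_sub _ (map_sub _) _ _).symm

lemma lie_extCombination_mem_span {e f : P → Matrix J J K} {S : Submodule K (Matrix J J K)}
    (lie_mem : ∀ a b, ⁅e a, f b⁆ ∈ S) (t y : P → F) :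
    ⁅extCombination F e t, extCombination F f y⁆ ∈
      Submodule.span F ((·.map (algebraMap K F)) '' (S : Set (Matrix J J K))) := by
  simp only [extCombination_apply, sum_lie_sum]
  refine Submodule.sum_mem _ fun a _ => Submodule.sum_mem _ fun b _ => ?_
  rw [smul_lie, lie_smul, lie_map_algebraMap]
  exact Submodule.smul_mem _ _ <| Submodule.smul_mem _ _ <|
    Submodule.subset_span <| Set.mem_image_of_mem _ (lie_mem a b)

lemma isNilpotent_extCombination [CharZero K] {H : Matrix J J K} {κ : K} (hκ : κ ≠ 0)
    {e : P → Matrix J J K} (lie_e : ∀ a, ⁅H, e a⁆ = κ • e a) (t : P → F) :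
    IsNilpotent (extCombination F e t) := by
  have := charZero_of_injective_algebraMap (algebraMap K F).injective
  refine isNilpotent_of_lie_eq_smul (H := H.map (algebraMap K F)) (κ := algebraMap K F κ)
    (by simpa using hκ) ?_
  simp only [extCombination_apply, lie_sum, lie_smul, lie_map_algebraMap, lie_e, Finset.smul_sum]
  refine Finset.sum_congr rfl fun a _ => ?_
  rw [Matrix.map_smul' _ _ _ (map_mul _), smul_comm]

/-- The kernel of `ad X` on the span of the `f b` vanishes for generic `X` in the span of the
`e a`: an element of it is trace-orthogonal to all partial derivatives `∂X/∂tₐ = eₐ`. -/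
theorem card_le_finrank_of_lie_mem [CharZero K] {H : Matrix J J K} {κ : K} (hκ : κ ≠ 0)
    {e f : P → Matrix J J K} (lie_e : ∀ a, ⁅H, e a⁆ = κ • e a)
    (dual : ∀ a b, (e a * f b).trace = if a = b then 1 else 0)
    {S : Submodule K (Matrix J J K)} (lie_mem : ∀ a b, ⁅e a, f b⁆ ∈ S) :
    Fintype.card P ≤ Module.finrank K S := by
  let F := FractionRing (MvPolynomial P K)
  let t (a : P) : F := algebraMap (MvPolynomial P K) F (.X a)
  let T := Submodule.span F ((·.map (algebraMap K F)) '' (S : Set (Matrix J J K)))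
  let Λ : (P → F) →ₗ[F] T :=
    (LieAlgebra.ad F _ (extCombination F e t) ∘ₗ extCombination F f).codRestrict T
      (lie_extCombination_mem_span lie_mem t)
  have Λ_injective : Function.Injective Λ := by
    refine (injective_iff_map_eq_zero Λ).mpr fun y hy => funext fun a => ?_
    have comm : Commute (extCombination F e t) (extCombination F f y) :=
      commute_iff_lie_eq.mpr (congrArg Subtype.val hy)
    obtain ⟨D, hD⟩ := exists_partial_derivative K P a
    have := trace_derivation_mul_eq_zero D (isNilpotent_extCombination hκ lie_e t) comm
    rwa [map_derivation_extCombination e hD, trace_mul_extCombination dual] at this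
  calc Fintype.card P = Module.finrank F (P → F) := (Module.finrank_fintype_fun_eq_card F).symm
    _ ≤ Module.finrank F T := LinearMap.finrank_le_finrank_of_injective Λ_injective
    _ ≤ Module.finrank K S := finrank_span_map_le S

end GenericElement

section KillingLieAlgebra

open LieAlgebra LieAlgebra.IsKilling LieModule

variable {K L : Type*} [Field K] [LieRing L] [LieAlgebra K L] [FiniteDimensional K L]

attribute [local instance] LieRing.ofAssociativeRing in
theorem card_le_finrank_of_killingForm_dual [CharZero K] {P : Type*} [Fintype P] {h : L}
    {κ : K} (hκ : κ ≠ 0) {e f : P → L} (lie_e : ∀ a, ⁅h, e a⁆ = κ • e a)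
    (dual : ∀ a b, killingForm K L (e a) (f b) = if a = b then 1 else 0)
    {S : Submodule K L} (lie_mem : ∀ a b, ⁅e a, f b⁆ ∈ S) :
    Fintype.card P ≤ Module.finrank K S := by
  let basis := Module.finBasis K L
  let toMatrix := LinearMap.toMatrixAlgEquiv basis
  let adMatrix : L →ₗ[K] Matrix _ _ K := toMatrix.toLinearMap ∘ₗ (ad K L).toLinearMap
  have lie_adMatrix (x y : L) : ⁅adMatrix x, adMatrix y⁆ = adMatrix ⁅x, y⁆ := by
    simp [adMatrix, Ring.lie_def]
  have trace_adMatrix (x y : L) : (adMatrix x * adMatrix y).trace = killingForm K L x y := by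
    rw [killingForm_apply_apply, LinearMap.trace_eq_matrix_trace K basis]
    exact congrArg Matrix.trace (map_mul toMatrix (ad K L x) (ad K L y)).symm
  refine (card_le_finrank_of_lie_mem (H := adMatrix h) hκ (e := adMatrix ∘ e) (f := adMatrix ∘ f)
    (S := S.map adMatrix) (fun a => ?_) (fun a b => ?_) (fun a b => ?_)).trans
    (Submodule.finrank_map_le adMatrix S)
  · rw [Function.comp_apply, lie_adMatrix, lie_e, map_smul]
  · exact (trace_adMatrix _ _).trans (dual a b)
  · exact ⟨_, lie_mem a b, (lie_adMatrix _ _).symm⟩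

variable [IsKilling K L] (H : LieSubalgebra K L) [H.IsCartanSubalgebra] [IsTriangularizable K H L]

lemma exists_rootSpace_dual (α : Weight K H L) :
    ∃ e ∈ rootSpace H α, ∃ f ∈ rootSpace H (-α), killingForm K L e f = 1 := by
  obtain ⟨e, he, e_ne⟩ := α.exists_ne_zero
  obtain ⟨f, hf, hef⟩ : ∃ f ∈ rootSpace H (-α), killingForm K L e f ≠ 0 := by
    contrapose! e_ne
    simpa using mem_ker_killingForm_of_mem_rootSpace_of_forall_rootSpace_neg K L H he e_ne
  exact ⟨e, he, (killingForm K L e f)⁻¹ • f, Submodule.smul_mem _ _ hf, by simp [hef]⟩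

variable [CharZero K]

lemma rootSpace_le_span_singleton {α : Weight K H L} (hα : α.IsNonZero) {e : L}
    (he : e ∈ rootSpace H α) (e_ne : e ≠ 0) :
    (rootSpace H α).toSubmodule ≤ Submodule.span K {e} := fun y hy => by
  have ne : (⟨e, he⟩ : rootSpace H α) ≠ 0 := fun h => e_ne (congrArg Subtype.val h)
  obtain ⟨c, hc⟩ :=
    (finrank_eq_one_iff_of_nonzero' _ ne).mp (finrank_rootSpace_eq_one α hα) ⟨y, hy⟩
  exact Submodule.mem_span_singleton.mpr ⟨c, congrArg Subtype.val hc⟩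

theorem card_root_le_card_root_add_finrank (x : H) {κ : K} (hκ : κ ≠ 0) :
    Fintype.card {α : H.root // α.1 x = κ} ≤
      Fintype.card {α : H.root // α.1 x = 0} + Module.finrank K H := by
  choose e he f hf hef using fun α : H.root => exists_rootSpace_dual H α.1
  have e_ne (α : H.root) : e α ≠ 0 := fun h => by simpa [h] using hef α
  let S : Submodule K L :=
    Submodule.span K (Set.range fun α : {α : H.root // α.1 x = 0} => e α) ⊔ H.toSubmodule
  have mem_S {γ : H → K} (hγ : γ x = 0) {y : L} (hy : y ∈ rootSpace H γ) : y ∈ S := by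
    by_cases γ_weight : genWeightSpace L γ = ⊥
    · rw [rootSpace, γ_weight, LieSubmodule.mem_bot] at hy
      exact hy ▸ S.zero_mem
    by_cases γ_zero : γ = 0
    · rw [γ_zero, rootSpace_zero_eq] at hy
      exact Submodule.mem_sup_right hy
    let α : H.root := ⟨⟨γ, γ_weight⟩, by simpa [Weight.IsNonZero, Weight.IsZero] using γ_zero⟩
    have e_mem : e α ∈ S := Submodule.mem_sup_left (Submodule.subset_span ⟨⟨α, hγ⟩, rfl⟩)
    exact (Submodule.span_singleton_le_iff_mem _ _).mpr e_mem
      (rootSpace_le_span_singleton H (LieSubalgebra.isNonZero_coe_root α) (he α) (e_ne α) hy)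
  refine (card_le_finrank_of_killingForm_dual (h := (x : L)) hκ (S := S)
    (e := fun α : {α : H.root // α.1 x = κ} => e α) (f := fun α => f α)
    (fun α => ?_) (fun α β => ?_) (fun α β => ?_)).trans
    ((Submodule.finrank_add_le_finrank_add_finrank _ _).trans ?_)
  · exact (lie_eq_smul_of_mem_rootSpace (he α) x).trans (by rw [α.2])
  · split_ifs with h
    · rw [h, hef]
    · refine killingForm_apply_eq_zero_of_mem_rootSpace_of_add_ne_zero K L H (he α) (hf β) ?_
      rw [← sub_eq_add_neg, sub_ne_zero]
      exact fun h' => h (Subtype.ext (Subtype.ext (Weight.ext fun y => congrFun h' y)))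
  · refine mem_S ?_ (lie_mem_genWeightSpace_of_mem_genWeightSpace (he α) (hf β))
    simp [α.2, β.2]
  · exact Nat.add_le_add_right (finrank_range_le_card _) _

end KillingLieAlgebra

section IrreducibleRootPairing

open RootPairing LieAlgebra.IsKilling
open RootPairing.GeckConstruction (lieAlgebra cartanSubalgebra' equivRootSystem)

attribute [local instance 100] LieRing.ofAssociativeRing

variable {ι K M N : Type*} [Field K] [AddCommGroup M] [Module K M] [AddCommGroup N] [Module K N]

lemma exists_apply_root_eq_of_equiv {ι' H : Type*} [AddCommGroup H] [Module K H]
    [FiniteDimensional K H] {P : RootPairing ι K M N} {Q : RootPairing ι' K (Module.Dual K H) H}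
    (e : P.Equiv Q) (L : Module.Dual K M) :
    ∃ x : H, ∀ i, Q.root (e.indexEquiv i) x = L (P.root i) := by
  refine ⟨(Module.evalEquiv K H).symm (L ∘ₗ (Equiv.weightEquiv P Q e).symm), fun i => ?_⟩
  rw [Module.apply_evalEquiv_symm_apply, ← Hom.root_weightMap_apply, LinearMap.comp_apply]
  exact congrArg L ((Equiv.weightEquiv P Q e).symm_apply_apply (P.root i))

theorem card_root_le_of_isIrreducible [Fintype ι] [CharZero K] [IsAlgClosed K]
    (P : RootPairing ι K M N) [P.IsReduced] [P.IsCrystallographic] [P.IsIrreducible]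
    [P.IsRootSystem] (L : Module.Dual K M) {κ : K} (hκ : κ ≠ 0) :
    Fintype.card {i // L (P.root i) = κ} ≤
      Fintype.card {i // L (P.root i) = 0} + Module.finrank K M := by
  obtain ⟨b⟩ := P.nonempty_base
  let H := cartanSubalgebra' b
  let e : P.Equiv (rootSystem H) := equivRootSystem b
  obtain ⟨x, hx⟩ := exists_apply_root_eq_of_equiv e L
  have card_eq (c : K) : Fintype.card {i // L (P.root i) = c} =
      Fintype.card {α : LieSubalgebra.root (H := H) // α.1 x = c} :=
    Fintype.card_congr (e.indexEquiv.subtypeEquiv fun i => by rw [← hx]; rfl)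
  have finrank_eq : Module.finrank K M = Module.finrank K H := by
    rw [(Equiv.weightEquiv P _ e).finrank_eq, Subspace.dual_finrank_eq]
  rw [card_eq, card_eq, finrank_eq]
  exact card_root_le_card_root_add_finrank H x hκ

end IrreducibleRootPairing

section LevelCount

lemma apply_le_sum_mul_sub (m : ℕ → ℤ) {c n : ℕ} (hcn : c ≤ n) (hn : m n = 0) :
    m c ≤ ∑ i ∈ Finset.range n, m i * (m i - m (i + 1)) := by
  have up (n : ℕ) : m n ≤ m n ^ 2 + 2 * ∑ i ∈ Finset.range n, m i * (m i - m (i + 1)) := by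
    induction n with
    | zero => simpa using Int.le_self_sq (m 0)
    | succ n ih =>
      rw [Finset.sum_range_succ]
      linarith [Int.le_self_sq (m (n + 1) - m n)]
  have down (n : ℕ) (hcn : c ≤ n) :
      2 * m c ≤ m n + m n ^ 2 + 2 * ∑ i ∈ Finset.range n, m i * (m i - m (i + 1)) := by
    induction n, hcn using Nat.le_induction with
    | base => linarith [up c]
    | succ n _ ih =>
      rw [Finset.sum_range_succ]
      linarith [Int.le_self_sq (m n - m (n + 1))]
  have := down n hcn
  rw [hn] at this
  linarith

variable {X : Type*} (J : Finset X)

lemma card_pairs_eq_sum {f : X → ℕ} {n : ℕ} (hn : ∀ x ∈ J, f x < n) (k : ℕ) :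
    ((J ×ˢ J).filter fun p => f p.1 = f p.2 + k).card =
      ∑ i ∈ Finset.range n, (J.filter (f · = i)).card * (J.filter (f · = i + k)).card := by
  rw [Finset.card_eq_sum_card_fiberwise (f := fun p => f p.2) (t := Finset.range n)]
  · refine Finset.sum_congr rfl fun i _ => ?_
    rw [mul_comm, ← Finset.card_product, Finset.filter_filter, ← Finset.filter_product]
    exact congrArg Finset.card (Finset.filter_congr fun p _ => by lia)
  · intro p hp
    exact Finset.mem_coe.mpr (Finset.mem_range.mpr
      (hn _ (Finset.mem_product.mp (Finset.mem_filter.mp hp).1).2))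

lemma card_nat_level_add_card_pairs_le (f : X → ℕ) (c : ℕ) :
    (J.filter (f · = c)).card + ((J ×ˢ J).filter fun p => f p.1 = f p.2 + 1).card ≤
      ((J ×ˢ J).filter fun p => f p.1 = f p.2).card := by
  set n := max c (J.sup f) + 1
  have hn : ∀ x ∈ J, f x < n := fun x hx =>
    Nat.lt_succ_of_le ((Finset.le_sup hx).trans (le_max_right _ _))
  have level_n : (J.filter (f · = n)).card = 0 :=
    Finset.card_eq_zero.mpr (Finset.filter_eq_empty_iff.mpr fun x hx => (hn x hx).ne)
  have le := apply_le_sum_mul_sub (fun i => ((J.filter (f · = i)).card : ℤ))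
    (show c ≤ n by omega) (by exact_mod_cast level_n)
  simp only [mul_sub, Finset.sum_sub_distrib] at le
  have same := card_pairs_eq_sum J hn 0
  have succ := card_pairs_eq_sum J hn 1
  simp only [add_zero] at same
  rw [same, succ]
  rw [← Nat.cast_le (α := ℤ)]
  push_cast
  linarith

lemma card_level_add_card_pairs_le (f : X → ℤ) :
    (J.filter (f · = 0)).card + ((J ×ˢ J).filter fun p => f p.1 = f p.2 + 1).card ≤
      ((J ×ˢ J).filter fun p => f p.1 = f p.2).card := by
  obtain ⟨K, hK⟩ : ∃ K : ℕ, ∀ x ∈ J, (f x).natAbs ≤ K :=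
    ⟨J.sup fun x => (f x).natAbs, fun x hx => Finset.le_sup (f := fun x => (f x).natAbs) hx⟩
  have le := card_nat_level_add_card_pairs_le J (fun x => (f x + K).toNat) K
  have mem_left {p : X × X} (hp : p ∈ J ×ˢ J) := hK _ (Finset.mem_product.mp hp).1
  have mem_right {p : X × X} (hp : p ∈ J ×ˢ J) := hK _ (Finset.mem_product.mp hp).2
  convert le using 2
  · exact congrArg Finset.card (Finset.filter_congr fun x hx => by have := hK x hx; lia)
  · exact congrArg Finset.card (Finset.filter_congr fun p hp => by
      have := mem_left hp; have := mem_right hp; lia)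
  · exact Finset.filter_congr fun p hp => by have := mem_left hp; have := mem_right hp; lia

lemma card_filter_apply_add_card_pairs_le {T : Type*} [AddCommGroup T]
    [Module ℝ T] (L : X → T) {κ₁ κ₂ : T} (hκ₂ : κ₂ ≠ 0)
    (hJ : ∀ x ∈ J, ∃ j : ℤ, L x = κ₁ + j • κ₂) :
    (J.filter (L · = κ₁)).card + ((J ×ˢ J).filter fun p => L p.1 = L p.2 + κ₂).card ≤
      ((J ×ˢ J).filter fun p => L p.1 = L p.2).card := by
  choose! f hf using hJ
  have inj (i j : ℤ) : κ₁ + i • κ₂ = κ₁ + j • κ₂ ↔ i = j := by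
    rw [add_right_inj, ← Int.cast_smul_eq_zsmul ℝ, ← Int.cast_smul_eq_zsmul ℝ,
      (smul_left_injective ℝ hκ₂).eq_iff, Int.cast_inj]
  convert card_level_add_card_pairs_le J f using 2
  · exact congrArg Finset.card (Finset.filter_congr fun x hx => by rw [hf x hx, ← inj]; simp)
  · refine congrArg Finset.card (Finset.filter_congr fun p hp => ?_)
    rw [hf _ (Finset.mem_product.mp hp).1, hf _ (Finset.mem_product.mp hp).2, ← inj, add_zsmul,
      one_zsmul, add_assoc]
  · refine Finset.filter_congr fun p hp => ?_
    rw [hf _ (Finset.mem_product.mp hp).1, hf _ (Finset.mem_product.mp hp).2, inj]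

end LevelCount

section EuclideanRootSystem

open scoped InnerProductSpace
open Module (finrank)
open Submodule (span)

/-- A finite reduced crystallographic root system in a Euclidean space, not required to span it. -/
structure IsEuclideanRootSystem {E : Type*} [NormedAddCommGroup E] [InnerProductSpace ℝ E]
    (Φ : Finset E) : Prop where
  zero_notMem : (0 : E) ∉ Φ
  reflection_mem : ∀ α ∈ Φ, ∀ β ∈ Φ, (ℝ ∙ α)ᗮ.reflection β ∈ Φ
  integral : ∀ α ∈ Φ, ∀ β ∈ Φ, ∃ z : ℤ, 2 * ⟪α, β⟫_ℝ = z * ⟪α, α⟫_ℝ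
  reduced : ∀ α ∈ Φ, ∀ c : ℝ, c • α ∈ Φ → c = 1 ∨ c = -1

variable {E : Type*} [NormedAddCommGroup E] [InnerProductSpace ℝ E] {Φ : Finset E} {α β : E}

lemma reflection_eq_sub_smul {c : ℝ} (h : 2 * ⟪α, β⟫_ℝ = c * ⟪α, α⟫_ℝ) :
    (ℝ ∙ α)ᗮ.reflection β = β - c • α := by
  rcases eq_or_ne α 0 with rfl | hα
  · rw [smul_zero, sub_zero, Submodule.reflection_eq_self_iff]
    simp
  have coeff : 2 * (⟪α, β⟫_ℝ / ‖α‖ ^ 2) = c := by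
    rw [← real_inner_self_eq_norm_sq, mul_div_assoc', h, mul_div_cancel_right₀]
    exact inner_self_ne_zero.mpr hα
  rw [Submodule.reflection_orthogonal_apply, Submodule.reflection_singleton_apply, neg_sub,
    two_smul, ← two_smul ℝ, smul_smul, RCLike.ofReal_real_eq_id, id, coeff]

namespace IsEuclideanRootSystem

lemma ne_zero (hΦ : IsEuclideanRootSystem Φ) (hα : α ∈ Φ) : α ≠ 0 :=
  ne_of_mem_of_not_mem hα hΦ.zero_notMem

lemma inner_self_pos (hΦ : IsEuclideanRootSystem Φ) (hα : α ∈ Φ) : 0 < ⟪α, α⟫_ℝ :=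
  real_inner_self_pos.mpr (hΦ.ne_zero hα)

lemma sub_smul_mem (hΦ : IsEuclideanRootSystem Φ) (hα : α ∈ Φ) (hβ : β ∈ Φ) {c : ℝ}
    (h : 2 * ⟪α, β⟫_ℝ = c * ⟪α, α⟫_ℝ) : β - c • α ∈ Φ :=
  reflection_eq_sub_smul h ▸ hΦ.reflection_mem α hα β hβ

lemma neg_mem (hΦ : IsEuclideanRootSystem Φ) (hα : α ∈ Φ) : -α ∈ Φ := by
  simpa [two_smul] using hΦ.sub_smul_mem hα hα rfl

lemma sub_mem (hΦ : IsEuclideanRootSystem Φ) (hα : α ∈ Φ) (hβ : β ∈ Φ)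
    (h : 2 * ⟪α, β⟫_ℝ = ⟪α, α⟫_ℝ) : β - α ∈ Φ := by
  simpa using hΦ.sub_smul_mem hα hβ (c := 1) (by rw [h, one_mul])

lemma of_subset (hΦ : IsEuclideanRootSystem Φ) {Ψ : Finset E} (hΨ : Ψ ⊆ Φ)
    (h : ∀ α ∈ Ψ, ∀ β ∈ Ψ, (ℝ ∙ α)ᗮ.reflection β ∈ Ψ) : IsEuclideanRootSystem Ψ where
  zero_notMem := mt (@hΨ 0) hΦ.zero_notMem
  reflection_mem := h
  integral α hα β hβ := hΦ.integral α (hΨ hα) β (hΨ hβ)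
  reduced α hα c hc := hΦ.reduced α (hΨ hα) c (hΨ hc)

lemma inner_mul_inner_lt (hΦ : IsEuclideanRootSystem Φ) (hα : α ∈ Φ) (hβ : β ∈ Φ) (ne : β ≠ α)
    (ne_neg : β ≠ -α) : ⟪α, β⟫_ℝ * ⟪α, β⟫_ℝ < ⟪α, α⟫_ℝ * ⟪β, β⟫_ℝ := by
  refine (real_inner_mul_inner_self_le α β).lt_of_ne fun h => ?_
  have parallel : ⟪α, α⟫_ℝ • β = ⟪α, β⟫_ℝ • α := by
    rw [← sub_eq_zero, ← inner_self_eq_zero (𝕜 := ℝ)]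
    simp only [inner_sub_left, inner_sub_right, real_inner_smul_left, real_inner_smul_right,
      real_inner_comm α β]
    linear_combination -⟪α, α⟫_ℝ * h
  rw [← eq_inv_smul_iff₀ (hΦ.inner_self_pos hα).ne', smul_smul] at parallel
  rcases hΦ.reduced α hα _ (parallel ▸ hβ) with hc | hc
  · exact ne (by rw [parallel, hc, one_smul])
  · exact ne_neg (by rw [parallel, hc, neg_one_smul])

lemma two_mul_inner_eq_of_inner_pos (hΦ : IsEuclideanRootSystem Φ) (hα : α ∈ Φ) (hβ : β ∈ Φ)
    (le : ⟪α, α⟫_ℝ ≤ ⟪β, β⟫_ℝ) (pos : 0 < ⟪α, β⟫_ℝ) (ne : β ≠ α) :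
    2 * ⟪α, β⟫_ℝ = ⟪β, β⟫_ℝ ∧
      (⟪β, β⟫_ℝ = ⟪α, α⟫_ℝ ∨ ⟪β, β⟫_ℝ = 2 * ⟪α, α⟫_ℝ ∨ ⟪β, β⟫_ℝ = 3 * ⟪α, α⟫_ℝ) := by
  obtain ⟨z, hz⟩ := hΦ.integral α hα β hβ
  obtain ⟨w, hw⟩ := hΦ.integral β hβ α hα
  rw [real_inner_comm] at hw
  have α_pos := hΦ.inner_self_pos hα
  have β_pos := hΦ.inner_self_pos hβ
  have lt := hΦ.inner_mul_inner_lt hα hβ ne (by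
    rintro rfl
    rw [inner_neg_right] at pos
    linarith)
  have z_pos : 0 < z := by
    have : (0 : ℝ) < z := pos_of_mul_pos_left (by linarith) α_pos.le
    exact_mod_cast this
  have w_pos : 0 < w := by
    have : (0 : ℝ) < w := pos_of_mul_pos_left (by linarith) β_pos.le
    exact_mod_cast this
  have w_le_z : w ≤ z := by
    have : (w : ℝ) ≤ z := by
      refine le_of_mul_le_mul_right ?_ β_pos
      nlinarith [(show (0 : ℝ) < z by exact_mod_cast z_pos)]
    exact_mod_cast this
  have zw_lt : z * w < 4 := by
    have : (z * w : ℝ) * (⟪α, α⟫_ℝ * ⟪β, β⟫_ℝ) < 4 * (⟪α, α⟫_ℝ * ⟪β, β⟫_ℝ) := by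
      calc (z * w : ℝ) * (⟪α, α⟫_ℝ * ⟪β, β⟫_ℝ) = 4 * (⟪α, β⟫_ℝ * ⟪α, β⟫_ℝ) := by
            linear_combination (-2 * ⟪α, β⟫_ℝ) * hz - z * ⟪α, α⟫_ℝ * hw
        _ < _ := by gcongr
    exact_mod_cast lt_of_mul_lt_mul_right this (mul_pos α_pos β_pos).le
  obtain rfl : w = 1 := by nlinarith
  have z_le : z ≤ 3 := by omega
  refine ⟨by simpa using hw, ?_⟩
  interval_cases z <;> push_cast at hz hw
  · left; linarith
  · right; left; linarith
  · right; right; linarith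

end IsEuclideanRootSystem

/-- A finite set of vectors is indecomposable if it is not the union of two nonempty orthogonal
parts. The empty set counts as indecomposable. -/
def IsIndecomposable (Φ : Finset E) : Prop :=
  ∀ Ψ ⊆ Φ, Ψ.Nonempty → (∀ α ∈ Ψ, ∀ β ∈ Φ, β ∉ Ψ → ⟪α, β⟫_ℝ = 0) → Ψ = Φ

section Complexification

open scoped TensorProduct

/-- The element `α` of `Φ`, as a vector of the complexified span of `Φ`. -/
def complexRoot (Φ : Finset E) : Φ ↪ ℂ ⊗[ℝ] span ℝ (Φ : Set E) where
  toFun α := 1 ⊗ₜ ⟨α, Submodule.subset_span α.2⟩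
  inj' _ _ h := Subtype.ext (Subtype.mk.inj
    (Module.FaithfullyFlat.tensorProduct_mk_injective (A := ℝ) (B := ℂ) (span ℝ (Φ : Set E)) h))

/-- The coroot of `α`, as a complex linear functional on the complexified span of `Φ`. -/
def complexCoroot (Φ : Finset E) (α : Φ) : Module.Dual ℂ (ℂ ⊗[ℝ] span ℝ (Φ : Set E)) :=
  Module.Dual.baseChange ℂ
    ((2 / ⟪(α : E), α⟫_ℝ) • innerₗ E (α : E) ∘ₗ (span ℝ (Φ : Set E)).subtype)

lemma complexRoot_apply (α : Φ) :
    complexRoot Φ α = 1 ⊗ₜ ⟨α, Submodule.subset_span α.2⟩ := rfl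

lemma ofReal_smul_complexRoot (c : ℝ) (α : Φ) : (c : ℂ) • complexRoot Φ α =
    TensorProduct.mk ℝ ℂ _ 1 (c • ⟨α, Submodule.subset_span α.2⟩) := by
  rw [complexRoot_apply, TensorProduct.mk_apply, TensorProduct.smul_tmul',
    ← TensorProduct.smul_tmul, Complex.real_smul, smul_eq_mul]

lemma span_range_complexRoot : span ℂ (Set.range (complexRoot Φ)) = ⊤ := by
  have range_eq : Set.range (complexRoot Φ) =
      TensorProduct.mk ℝ ℂ (span ℝ (Φ : Set E)) 1 '' (Subtype.val ⁻¹' (Φ : Set E)) := by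
    ext x
    constructor
    · rintro ⟨α, rfl⟩
      exact ⟨_, α.2, rfl⟩
    · rintro ⟨v, hv, rfl⟩
      exact ⟨⟨v, hv⟩, rfl⟩
  rw [range_eq, ← Submodule.baseChange_span, Submodule.span_span_coe_preimage,
    Submodule.baseChange_top]

namespace IsEuclideanRootSystem

lemma complexCoroot_complexRoot (hΦ : IsEuclideanRootSystem Φ) (α β : Φ) {c : ℝ}
    (h : 2 * ⟪(α : E), β⟫_ℝ = c * ⟪(α : E), α⟫_ℝ) :
    complexCoroot Φ α (complexRoot Φ β) = c := by
  rw [complexCoroot, complexRoot_apply, Module.Dual.baseChange_apply_tmul,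
    RCLike.real_smul_eq_coe_mul, mul_one]
  refine congrArg Complex.ofReal ?_
  calc 2 / ⟪(α : E), α⟫_ℝ * ⟪(α : E), β⟫_ℝ = 2 * ⟪(α : E), β⟫_ℝ / ⟪(α : E), α⟫_ℝ := by ring
    _ = c := by rw [h, mul_div_cancel_right₀ _ (hΦ.inner_self_pos α.2).ne']

lemma preReflection_complexRoot (hΦ : IsEuclideanRootSystem Φ) (α β : Φ) :
    Module.preReflection (complexRoot Φ α) (complexCoroot Φ α) (complexRoot Φ β) =
      complexRoot Φ ⟨_, hΦ.reflection_mem α α.2 β β.2⟩ := by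
  obtain ⟨z, hz⟩ := hΦ.integral α α.2 β β.2
  rw [Module.preReflection_apply, hΦ.complexCoroot_complexRoot α β hz]
  rw [ofReal_smul_complexRoot, complexRoot_apply, ← TensorProduct.mk_apply, ← map_sub]
  exact congrArg _ (Subtype.ext (reflection_eq_sub_smul hz).symm)

lemma complexCoroot_injective (hΦ : IsEuclideanRootSystem Φ) :
    Function.Injective (complexCoroot Φ) := fun α β h => by
  obtain ⟨z, hz⟩ := hΦ.integral α α.2 β β.2
  obtain ⟨w, hw⟩ := hΦ.integral β β.2 α α.2
  have z_eq : (z : ℝ) = 2 := by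
    rw [← Complex.ofReal_inj, ← hΦ.complexCoroot_complexRoot α β hz, h]
    exact hΦ.complexCoroot_complexRoot β β rfl
  have w_eq : (w : ℝ) = 2 := by
    rw [← Complex.ofReal_inj, ← hΦ.complexCoroot_complexRoot β α hw, ← h]
    exact hΦ.complexCoroot_complexRoot α α rfl
  rw [z_eq] at hz
  rw [w_eq, real_inner_comm] at hw
  refine Subtype.ext (sub_eq_zero.mp (inner_self_eq_zero (𝕜 := ℝ).mp ?_))
  rw [inner_sub_left, inner_sub_right, inner_sub_right, real_inner_comm (α : E) β]
  linarith

variable (hΦ : IsEuclideanRootSystem Φ)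

/-- The complexification of a Euclidean root system, as a root pairing. -/
def complexification : RootPairing Φ ℂ (ℂ ⊗[ℝ] span ℝ (Φ : Set E))
    (Module.Dual ℂ (ℂ ⊗[ℝ] span ℝ (Φ : Set E))) :=
  .mk'' (Module.Dual.eval ℂ _) (complexRoot Φ) ⟨complexCoroot Φ, hΦ.complexCoroot_injective⟩
    (fun α => hΦ.complexCoroot_complexRoot α α rfl)
    (fun α => by
      rintro _ ⟨β, rfl⟩
      exact ⟨_, (hΦ.preReflection_complexRoot α β).symm⟩)
    span_range_complexRoot

lemma complexification_pairing (α β : Φ) {z : ℤ} (h : 2 * ⟪(α : E), β⟫_ℝ = z * ⟪(α : E), α⟫_ℝ) :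
    hΦ.complexification.pairing β α = z := by
  exact_mod_cast hΦ.complexCoroot_complexRoot α β h

lemma isRootSystem_complexification : hΦ.complexification.IsRootSystem :=
  RootPairing.isRootSystem_mk'' fun α β => by
    obtain ⟨z, hz⟩ := hΦ.integral β β.2 α α.2
    exact ⟨z, (hΦ.complexification_pairing β α hz).symm⟩

lemma isCrystallographic_complexification : hΦ.complexification.IsCrystallographic :=
  ⟨fun α β => by
    obtain ⟨z, hz⟩ := hΦ.integral β β.2 α α.2
    exact ⟨z, (hΦ.complexification_pairing β α hz).symm⟩⟩

lemma isReduced_complexification : hΦ.complexification.IsReduced := by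
  refine ⟨fun α β dep => ?_⟩
  rw [LinearIndependent.pair_iff' (hΦ.complexification.ne_zero α)] at dep
  push Not at dep
  obtain ⟨c, hc : c • complexRoot Φ α = complexRoot Φ β⟩ := dep
  obtain ⟨z, hz⟩ := hΦ.integral α α.2 β β.2
  have c_eq : c = (z / 2 : ℝ) := by
    have : c * 2 = z := by
      calc c * 2 = c * complexCoroot Φ α (complexRoot Φ α) := by
            rw [hΦ.complexCoroot_complexRoot α α rfl, Complex.ofReal_ofNat]
        _ = z := by
            rw [← smul_eq_mul, ← map_smul, hc, hΦ.complexCoroot_complexRoot α β hz,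
              Complex.ofReal_intCast]
    push_cast
    linear_combination this / 2
  rw [c_eq, ofReal_smul_complexRoot] at hc
  have β_eq : (z / 2 : ℝ) • (α : E) = β := congrArg Subtype.val
    (Module.FaithfullyFlat.tensorProduct_mk_injective (A := ℝ) (B := ℂ) _ hc)
  have root_eq : complexRoot Φ β = c • complexRoot Φ α := by rw [c_eq, ofReal_smul_complexRoot, hc]
  change complexRoot Φ α = complexRoot Φ β ∨ complexRoot Φ α = -complexRoot Φ β
  rcases hΦ.reduced α α.2 _ (β_eq ▸ β.2) with h | h <;> rw [root_eq, c_eq, h]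
  · simp
  · simp

lemma isIrreducible_complexification (hΦ' : IsIndecomposable Φ) (hne : Φ.Nonempty) :
    hΦ.complexification.IsIrreducible := by
  have := hΦ.isRootSystem_complexification
  have : Nontrivial (ℂ ⊗[ℝ] span ℝ (Φ : Set E)) :=
    ⟨complexRoot Φ ⟨_, hne.choose_spec⟩, 0, hΦ.complexification.ne_zero _⟩
  refine RootPairing.IsIrreducible.mk' _ fun q hq q_ne => ?_
  let q' : hΦ.complexification.invtRootSubmodule :=
    ⟨q, hΦ.complexification.mem_invtRootSubmodule_iff.mpr hq⟩
  let Ψ := Φ.filter fun α => ∃ h : α ∈ Φ, complexRoot Φ ⟨α, h⟩ ∈ q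
  have Ψ_eq : Ψ = Φ := by
    refine hΦ' Ψ (Finset.filter_subset _ _) ?_ fun α hα β hβ hβΨ => ?_
    · by_contra! h
      refine q_ne (congrArg Subtype.val
        ((RootPairing.invtRootSubmodule.eq_bot_iff q').mpr fun α hα => ?_))
      exact Finset.notMem_empty α.1 (h ▸ Finset.mem_filter.mpr ⟨α.2, α.2, hα⟩)
    · obtain ⟨-, hα, hαq⟩ := Finset.mem_filter.mp hα
      have hβq : hΦ.complexification.root ⟨β, hβ⟩ ∉ q := fun h =>
        hβΨ (Finset.mem_filter.mpr ⟨hβ, hβ, h⟩)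
      obtain ⟨z, hz⟩ := hΦ.integral β hβ α hα
      have z_eq : (z : ℝ) = 0 := by
        rw [← Complex.ofReal_inj, ← hΦ.complexCoroot_complexRoot ⟨β, hβ⟩ ⟨α, hα⟩ hz]
        exact RootPairing.invtRootSubmodule.le_ker_coroot' q' hβq hαq
      rw [z_eq, zero_mul, real_inner_comm] at hz
      linarith
  refine congrArg Subtype.val ((RootPairing.invtRootSubmodule.eq_top_iff q').mpr ?_)
  rintro _ ⟨α, rfl⟩
  obtain ⟨_, _, hα⟩ := Finset.mem_filter.mp (Ψ_eq.ge α.2)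
  exact hα

end IsEuclideanRootSystem

end Complexification

lemma card_le_of_isIndecomposable (hΦ : IsEuclideanRootSystem Φ) (hΦ' : IsIndecomposable Φ)
    {T : Type*} [AddCommGroup T] [Module ℝ T] (L : E →ₗ[ℝ] T) {κ : T} (hκ : κ ≠ 0) :
    (Φ.filter (L · = κ)).card ≤ (Φ.filter (L · = 0)).card + finrank ℝ (span ℝ (Φ : Set E)) := by
  rcases Φ.eq_empty_or_nonempty with rfl | hne
  · simp
  have := hΦ.isRootSystem_complexification
  have := hΦ.isCrystallographic_complexification
  have := hΦ.isReduced_complexification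
  have := hΦ.isIrreducible_complexification hΦ' hne
  obtain ⟨φ, hφ⟩ := Module.exists_dual_forall_apply_ne_zero (K := ℝ)
    (fun i : Option {α : Φ // L α ≠ 0} => i.elim κ fun α => L α)
    (by rintro (_ | α); exacts [hκ, α.2])
  have hφκ : φ κ ≠ 0 := hφ none
  have L_eq_zero_iff (α : Φ) : φ (L α) = 0 ↔ L α = 0 :=
    ⟨fun h => by_contra fun hα => hφ (some ⟨α, hα⟩) h, fun h => by rw [h, map_zero]⟩
  let Lℂ := Module.Dual.baseChange ℂ (φ ∘ₗ L ∘ₗ (span ℝ (Φ : Set E)).subtype)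
  have Lℂ_apply (α : Φ) : Lℂ (hΦ.complexification.root α) = φ (L α) := by
    change Lℂ (complexRoot Φ α) = _
    rw [complexRoot_apply, Module.Dual.baseChange_apply_tmul]
    simp
  have bound := card_root_le_of_isIrreducible hΦ.complexification Lℂ
    (Complex.ofReal_ne_zero.mpr hφκ)
  simp only [Lℂ_apply, Complex.ofReal_inj, Complex.ofReal_eq_zero, L_eq_zero_iff,
    Module.finrank_baseChange] at bound
  have card_eq (p : E → Prop) : Fintype.card {α : Φ // p α} = (Φ.filter p).card := by
    rw [← Fintype.card_coe]
    exact Fintype.card_congr ((Equiv.subtypeSubtypeEquivSubtypeInter (· ∈ Φ) p).trans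
      (Equiv.subtypeEquivRight fun α => by rw [Finset.mem_filter]))
  rw [card_eq (L · = 0), card_eq fun α => φ (L α) = φ κ] at bound
  refine le_trans (Finset.card_le_card fun α hα => ?_) bound
  rw [Finset.mem_filter] at hα ⊢
  exact ⟨hα.1, congrArg φ hα.2⟩

lemma finrank_span_add_finrank_span_le {Ψ Ψ' : Finset E} (hΨ : Ψ ⊆ Φ) (hΨ' : Ψ' ⊆ Φ)
    (h : ∀ α ∈ Ψ, ∀ β ∈ Ψ', ⟪α, β⟫_ℝ = 0) :
    finrank ℝ (span ℝ (Ψ : Set E)) + finrank ℝ (span ℝ (Ψ' : Set E)) ≤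
      finrank ℝ (span ℝ (Φ : Set E)) := by
  have disjoint : Disjoint (span ℝ (Ψ : Set E)) (span ℝ (Ψ' : Set E)) :=
    Submodule.IsOrtho.disjoint (Submodule.isOrtho_span.mpr fun _ hα _ hβ => h _ hα _ hβ)
  rw [← Submodule.finrank_sup_add_finrank_inf_eq, disjoint.eq_bot, finrank_bot, add_zero]
  exact Submodule.finrank_mono (sup_le (Submodule.span_mono (Finset.coe_subset.mpr hΨ))
    (Submodule.span_mono (Finset.coe_subset.mpr hΨ')))

lemma IsEuclideanRootSystem.orthogonal_part (hΦ : IsEuclideanRootSystem Φ) {Ψ Ψ' : Finset E}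
    (hΨ : Ψ ⊆ Φ) (hΨ' : ∀ β ∈ Φ, β ∉ Ψ → β ∈ Ψ')
    (h : ∀ α ∈ Ψ, ∀ β ∈ Ψ', ⟪α, β⟫_ℝ = 0) : IsEuclideanRootSystem Ψ := by
  refine hΦ.of_subset hΨ fun α hα β hβ => by_contra fun hγ => ?_
  have γ_mem := hΦ.reflection_mem α (hΨ hα) β (hΨ hβ)
  have hγ' := hΨ' _ γ_mem hγ
  obtain ⟨z, hz⟩ := hΦ.integral α (hΨ hα) β (hΨ hβ)
  have := hΦ.inner_self_pos γ_mem
  nth_rw 1 [reflection_eq_sub_smul hz] at this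
  rw [inner_sub_left, real_inner_smul_left, h β hβ _ hγ', h α hα _ hγ', mul_zero,
    sub_zero] at this
  exact this.false

lemma card_le_of_forall_isIndecomposable (hΦ : IsEuclideanRootSystem Φ)
    {T : Type*} [AddCommGroup T] [Module ℝ T] (L : E →ₗ[ℝ] T) (κ : E → T)
    (h : ∀ Ψ ⊆ Φ, IsEuclideanRootSystem Ψ → IsIndecomposable Ψ →
      (Ψ.filter fun α => L α = κ α).card ≤
        (Ψ.filter (L · = 0)).card + finrank ℝ (span ℝ (Ψ : Set E))) :
    (Φ.filter fun α => L α = κ α).card ≤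
      (Φ.filter (L · = 0)).card + finrank ℝ (span ℝ (Φ : Set E)) := by
  induction Φ using Finset.strongInduction with
  | H Φ ih =>
  by_cases indec : IsIndecomposable Φ
  · exact h Φ subset_rfl hΦ indec
  rw [IsIndecomposable] at indec
  push Not at indec
  obtain ⟨Ψ, hΨ, Ψ_nonempty, orth, Ψ_ne⟩ := indec
  have orth' : ∀ α ∈ Ψ, ∀ β ∈ Φ \ Ψ, ⟪α, β⟫_ℝ = 0 := fun α hα β hβ =>
    orth α hα β (Finset.mem_sdiff.mp hβ).1 (Finset.mem_sdiff.mp hβ).2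
  have bound := ih Ψ (hΨ.ssubset_of_ne Ψ_ne)
    (hΦ.orthogonal_part hΨ (fun β hβ hβ' => Finset.mem_sdiff.mpr ⟨hβ, hβ'⟩) orth')
    fun Ψ' hΨ' => h Ψ' (hΨ'.trans hΨ)
  have bound' := ih (Φ \ Ψ) (Finset.sdiff_ssubset hΨ Ψ_nonempty)
    (hΦ.orthogonal_part Finset.sdiff_subset
      (fun β hβ hβ' => by simpa [hβ] using hβ')
      fun α hα β hβ => (real_inner_comm _ _).trans (orth' β hβ α hα))
    fun Ψ' hΨ' => h Ψ' (hΨ'.trans Finset.sdiff_subset)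
  have finrank_le := finrank_span_add_finrank_span_le hΨ Finset.sdiff_subset orth'
  have card_eq (p : E → Prop) :
      (Φ.filter p).card = (Ψ.filter p).card + ((Φ \ Ψ).filter p).card := by
    rw [← Finset.card_union_of_disjoint
      (Finset.disjoint_filter_filter Finset.disjoint_sdiff), ← Finset.filter_union,
      Finset.union_sdiff_of_subset hΨ]
  rw [card_eq, card_eq (L · = 0)]
  omega

theorem card_apply_eq_le (hΦ : IsEuclideanRootSystem Φ)
    {T : Type*} [AddCommGroup T] [Module ℝ T] (L : E →ₗ[ℝ] T) {κ : T} (hκ : κ ≠ 0) :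
    (Φ.filter (L · = κ)).card ≤ (Φ.filter (L · = 0)).card + finrank ℝ (span ℝ (Φ : Set E)) :=
  card_le_of_forall_isIndecomposable hΦ L (fun _ => κ) fun _ _ hΨ hΨ' =>
    card_le_of_isIndecomposable hΨ hΨ' L hκ

lemma inner_self_reflection (v w : E) :
    ⟪(ℝ ∙ v)ᗮ.reflection w, (ℝ ∙ v)ᗮ.reflection w⟫_ℝ = ⟪w, w⟫_ℝ :=
  LinearIsometryEquiv.inner_map_map _ w w

namespace IsEuclideanRootSystem

lemma exists_inner_ne_zero (hΦ : IsEuclideanRootSystem Φ) (hΦ' : IsIndecomposable Φ)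
    {p : E → Prop} (hp : ∀ α ∈ Φ, ∀ β ∈ Φ, p β → p ((ℝ ∙ α)ᗮ.reflection β))
    (hα : α ∈ Φ) (pα : p α) (hβ : β ∈ Φ) : ∃ γ ∈ Φ, p γ ∧ ⟪γ, β⟫_ℝ ≠ 0 := by
  have filter_eq := hΦ' (Φ.filter fun β => ∃ γ ∈ Φ, p γ ∧ ⟪γ, β⟫_ℝ ≠ 0) (Finset.filter_subset _ _)
    ⟨α, Finset.mem_filter.mpr ⟨hα, α, hα, pα, (hΦ.inner_self_pos hα).ne'⟩⟩ ?_
  · exact (Finset.mem_filter.mp (filter_eq.ge hβ)).2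
  rintro γ hγ δ hδ hδ'
  obtain ⟨hγ, ε, hε, pε, εγ_ne⟩ := Finset.mem_filter.mp hγ
  by_contra γδ_ne
  have orth : ∀ ε ∈ Φ, p ε → ⟪ε, δ⟫_ℝ = 0 := fun ε hε pε =>
    by_contra fun h => hδ' (Finset.mem_filter.mpr ⟨hδ, ε, hε, pε, h⟩)
  obtain ⟨z, hz⟩ := hΦ.integral γ hγ ε hε
  have reflected := orth _ (hΦ.reflection_mem γ hγ ε hε) (hp γ hγ ε hε pε)
  rw [reflection_eq_sub_smul hz, inner_sub_left, real_inner_smul_left, orth ε hε pε, zero_sub,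
    neg_eq_zero, mul_eq_zero, or_iff_left γδ_ne] at reflected
  rw [reflected, zero_mul, real_inner_comm] at hz
  exact εγ_ne (by linarith)

lemma exists_inner_pos (hΦ : IsEuclideanRootSystem Φ) (hΦ' : IsIndecomposable Φ)
    {p : E → Prop} (hp : ∀ α ∈ Φ, ∀ β ∈ Φ, p β → p ((ℝ ∙ α)ᗮ.reflection β))
    (hα : α ∈ Φ) (pα : p α) (hβ : β ∈ Φ) : ∃ γ ∈ Φ, p γ ∧ ⟪γ, γ⟫_ℝ = ⟪α, α⟫_ℝ ∧ 0 < ⟪γ, β⟫_ℝ := by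
  obtain ⟨γ, hγ, ⟨pγ, γ_norm⟩, γβ_ne⟩ := hΦ.exists_inner_ne_zero hΦ'
    (p := fun γ => p γ ∧ ⟪γ, γ⟫_ℝ = ⟪α, α⟫_ℝ)
    (fun α hα β hβ h => ⟨hp α hα β hβ h.1, (inner_self_reflection α β).trans h.2⟩)
    hα ⟨pα, rfl⟩ hβ
  rcases γβ_ne.lt_or_gt with neg | pos
  · refine ⟨-γ, hΦ.neg_mem hγ, ?_, by rwa [inner_neg_neg], by rw [inner_neg_left]; linarith⟩
    rw [← Submodule.reflection_orthogonalComplement_singleton_eq_neg (𝕜 := ℝ)]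
    exact hp γ hγ γ hγ pγ
  · exact ⟨γ, hγ, pγ, γ_norm, pos⟩

lemma of_inner_self_eq (hΦ : IsEuclideanRootSystem Φ) (hΦ' : IsIndecomposable Φ)
    {p : E → Prop} (hp : ∀ α ∈ Φ, ∀ β ∈ Φ, p β → p ((ℝ ∙ α)ᗮ.reflection β))
    (hα : α ∈ Φ) (pα : p α) (hβ : β ∈ Φ) (h : ⟪β, β⟫_ℝ = ⟪α, α⟫_ℝ) : p β := by
  obtain ⟨γ, hγ, pγ, γ_norm, pos⟩ := hΦ.exists_inner_pos hΦ' hp hα pα hβ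
  rw [← h] at γ_norm
  rcases eq_or_ne β γ with rfl | ne
  · exact pγ
  have two_mul := (hΦ.two_mul_inner_eq_of_inner_pos hγ hβ γ_norm.le pos ne).1
  have sub_mem : γ - β ∈ Φ := hΦ.sub_mem hβ hγ (by rwa [real_inner_comm])
  have norm_eq : ‖γ‖ = ‖β‖ := by
    rw [norm_eq_sqrt_real_inner, norm_eq_sqrt_real_inner, γ_norm]
  exact Submodule.reflection_sub norm_eq ▸ hp _ sub_mem γ hγ pγ

lemma inner_self_eq_or_of_le (hΦ : IsEuclideanRootSystem Φ) (hΦ' : IsIndecomposable Φ)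
    (hα : α ∈ Φ) (hβ : β ∈ Φ) (le : ⟪α, α⟫_ℝ ≤ ⟪β, β⟫_ℝ) :
    ⟪β, β⟫_ℝ = ⟪α, α⟫_ℝ ∨ ⟪β, β⟫_ℝ = 2 * ⟪α, α⟫_ℝ ∨ ⟪β, β⟫_ℝ = 3 * ⟪α, α⟫_ℝ := by
  obtain ⟨γ, hγ, -, γ_norm, pos⟩ :=
    hΦ.exists_inner_pos hΦ' (p := fun _ => True) (fun _ _ _ _ => id) hβ trivial hα
  rw [← γ_norm] at le ⊢
  rcases eq_or_ne γ α with rfl | ne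
  · exact .inl rfl
  · exact (hΦ.two_mul_inner_eq_of_inner_pos hα hγ le (by rwa [real_inner_comm]) ne).2

end IsEuclideanRootSystem

/-- An indecomposable root system whose roots have exactly two squared lengths, `N` and `r * N`. -/
structure HasTwoLengths (Φ : Finset E) (N r : ℝ) : Prop where
  isEuclideanRootSystem : IsEuclideanRootSystem Φ
  isIndecomposable : IsIndecomposable Φ
  exists_short : ∃ α ∈ Φ, ⟪α, α⟫_ℝ = N
  exists_long : ∃ α ∈ Φ, ⟪α, α⟫_ℝ = r * N
  inner_self : ∀ α ∈ Φ, ⟪α, α⟫_ℝ = N ∨ ⟪α, α⟫_ℝ = r * N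

lemma HasTwoLengths.pos {N r : ℝ} (h : HasTwoLengths Φ N r) : 0 < N := by
  obtain ⟨α, hα, rfl⟩ := h.exists_short
  exact h.isEuclideanRootSystem.inner_self_pos hα

lemma IsEuclideanRootSystem.eq_or_hasTwoLengths (hΦ : IsEuclideanRootSystem Φ)
    (hΦ' : IsIndecomposable Φ) :
    (∀ α ∈ Φ, ∀ β ∈ Φ, ⟪α, α⟫_ℝ = ⟪β, β⟫_ℝ) ∨
      ∃ N, HasTwoLengths Φ N 2 ∨ HasTwoLengths Φ N 3 := by
  rcases Φ.eq_empty_or_nonempty with rfl | hne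
  · simp
  obtain ⟨α, hα, α_min⟩ := Φ.exists_min_image (fun x => ⟪x, x⟫_ℝ) hne
  by_cases single : ∀ β ∈ Φ, ⟪β, β⟫_ℝ = ⟪α, α⟫_ℝ
  · exact .inl fun β hβ γ hγ => (single β hβ).trans (single γ hγ).symm
  push Not at single
  obtain ⟨β, hβ, ne⟩ := single
  have trichotomy := fun γ hγ => hΦ.inner_self_eq_or_of_le hΦ' hα hγ (α_min γ hγ)
  have β_norm := (trichotomy β hβ).resolve_left ne
  have norms : ∀ γ ∈ Φ, ⟪γ, γ⟫_ℝ = ⟪α, α⟫_ℝ ∨ ⟪γ, γ⟫_ℝ = ⟪β, β⟫_ℝ := by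
    intro γ hγ
    by_contra! h
    have γ_norm := (trichotomy γ hγ).resolve_left h.1
    rcases le_total ⟪β, β⟫_ℝ ⟪γ, γ⟫_ℝ with le | le
    · have := hΦ.inner_self_eq_or_of_le hΦ' hβ hγ le
      grind
    · have := hΦ.inner_self_eq_or_of_le hΦ' hγ hβ le
      grind
  refine .inr ⟨⟪α, α⟫_ℝ, β_norm.imp (fun h => ?_) fun h => ?_⟩
  · exact ⟨hΦ, hΦ', ⟨α, hα, rfl⟩, ⟨β, hβ, h⟩, fun γ hγ => h ▸ norms γ hγ⟩
  · exact ⟨hΦ, hΦ', ⟨α, hα, rfl⟩, ⟨β, hβ, h⟩, fun γ hγ => h ▸ norms γ hγ⟩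

namespace IsEuclideanRootSystem

lemma inner_cases (hΦ : IsEuclideanRootSystem Φ) (hα : α ∈ Φ) (hβ : β ∈ Φ)
    (le : ⟪α, α⟫_ℝ ≤ ⟪β, β⟫_ℝ) :
    β = α ∨ β = -α ∨ ⟪α, β⟫_ℝ = 0 ∨ 2 * ⟪α, β⟫_ℝ = ⟪β, β⟫_ℝ ∨ 2 * ⟪α, β⟫_ℝ = -⟪β, β⟫_ℝ := by
  by_cases eq : β = α
  · exact .inl eq
  by_cases eq_neg : -β = α
  · exact .inr (.inl (neg_eq_iff_eq_neg.mp eq_neg))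
  rcases lt_trichotomy ⟪α, β⟫_ℝ 0 with neg | zero | pos
  · have := (hΦ.two_mul_inner_eq_of_inner_pos hα (hΦ.neg_mem hβ) (by rwa [inner_neg_neg])
      (by rwa [inner_neg_right, neg_pos]) eq_neg).1
    rw [inner_neg_neg, inner_neg_right] at this
    exact .inr (.inr (.inr (.inr (by linarith))))
  · exact .inr (.inr (.inl zero))
  · exact .inr (.inr (.inr (.inl (hΦ.two_mul_inner_eq_of_inner_pos hα hβ le pos eq).1)))

lemma eq_of_inner_eq (hΦ : IsEuclideanRootSystem Φ) (hα : α ∈ Φ) (hβ : β ∈ Φ)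
    (h : ⟪β, β⟫_ℝ = ⟪α, α⟫_ℝ) (h' : ⟪α, β⟫_ℝ = ⟪α, α⟫_ℝ) : β = α := by
  have pos := hΦ.inner_self_pos hα
  rcases hΦ.inner_cases hα hβ h.ge with eq | rfl | h₀ | h₀ | h₀
  · exact eq
  · rw [inner_neg_right] at h'
    linarith
  all_goals linarith

lemma card_inner_self_eq_le (hΦ : IsEuclideanRootSystem Φ) {T : Type*} [AddCommGroup T]
    [Module ℝ T] (L : E →ₗ[ℝ] T) {κ : T} (hκ : κ ≠ 0) (M : ℝ) :
    (Φ.filter fun α => ⟪α, α⟫_ℝ = M ∧ L α = κ).card ≤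
      (Φ.filter (L · = 0)).card + finrank ℝ (span ℝ (Φ : Set E)) :=
  (Finset.card_le_card (Finset.monotone_filter_right _ fun _ _ => And.right)).trans
    (card_apply_eq_le hΦ L hκ)

end IsEuclideanRootSystem

lemma IsIndecomposable.subset_span (hΦ : IsIndecomposable Φ) {F : Set E} (hF : F ⊆ Φ)
    (hne : F.Nonempty) (h : ∀ f ∈ F, ∀ β ∈ Φ, ⟪f, β⟫_ℝ ≠ 0 → β ∈ span ℝ F) :
    (Φ : Set E) ⊆ span ℝ F := by
  obtain ⟨f, hf⟩ := hne
  have filter_eq := hΦ (Φ.filter (· ∈ span ℝ F)) (Finset.filter_subset _ _)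
    ⟨f, Finset.mem_filter.mpr ⟨hF hf, Submodule.subset_span hf⟩⟩ fun α hα β hβ hβ' => by
      have ortho : span ℝ F ⟂ span ℝ {β} := Submodule.isOrtho_span.mpr fun f hf γ hγ => by
        rw [Set.mem_singleton_iff.mp hγ]
        exact by_contra fun ne => hβ' (Finset.mem_filter.mpr ⟨hβ, h f hf β hβ ne⟩)
      exact ortho.inner_eq (Finset.mem_filter.mp hα).2 (Submodule.mem_span_singleton_self β)
  exact fun β hβ => (Finset.mem_filter.mp (filter_eq.ge hβ)).2

section TwoLengths

variable {N : ℝ} {T : Type*} [AddCommGroup T] [Module ℝ T]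

namespace HasTwoLengths

lemma mem_span_pair_of_short (h : HasTwoLengths Φ N 3) {a b : E} (ha : a ∈ Φ) (hb : b ∈ Φ)
    (a_norm : ⟪a, a⟫_ℝ = N) (b_norm : ⟪b, b⟫_ℝ = N) (hab : a + b ∈ Φ) (two_mul : 2 * ⟪a, b⟫_ℝ = N)
    (hβ : β ∈ Φ) (β_norm : ⟪β, β⟫_ℝ = N) (ne : ⟪a, β⟫_ℝ ≠ 0) : β ∈ span ℝ {a, b} := by
  have hΦ := h.isEuclideanRootSystem
  have N_pos := h.pos
  have ab_norm : ⟪a + b, a + b⟫_ℝ = 3 * N := by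
    rw [real_inner_add_add_self]
    linarith
  have ha' : a ∈ span ℝ {a, b} := Submodule.subset_span (Set.mem_insert a {b})
  have hb' : b ∈ span ℝ {a, b} := Submodule.subset_span (.inr rfl)
  have of_pos : ∀ γ ∈ Φ, ⟪γ, γ⟫_ℝ = N → 2 * ⟪a, γ⟫_ℝ = N → γ ∈ span ℝ {a, b} := by
    intro γ hγ γ_norm aγ
    have long : ⟪a, γ⟫_ℝ + ⟪b, γ⟫_ℝ = 0 ∨ 2 * (⟪a, γ⟫_ℝ + ⟪b, γ⟫_ℝ) = 3 * N ∨
        2 * (⟪a, γ⟫_ℝ + ⟪b, γ⟫_ℝ) = -(3 * N) := by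
      rw [← inner_add_left, ← ab_norm, real_inner_comm]
      rcases hΦ.inner_cases hγ hab (by linarith) with eq | eq | cases
      · rw [eq] at ab_norm
        linarith
      · rw [eq, inner_neg_neg] at ab_norm
        linarith
      · exact cases
    suffices γ = b ∨ 2 * ⟪b, γ⟫_ℝ = -N by
      rcases this with rfl | bγ
      · exact hb'
      rw [hΦ.eq_of_inner_eq (α := a - b) (hΦ.sub_mem hb ha (by rw [real_inner_comm]; linarith)) hγ
        (by rw [real_inner_sub_sub_self]; linarith)
        (by rw [real_inner_sub_sub_self, inner_sub_left]; linarith)]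
      exact sub_mem ha' hb'
    rcases hΦ.inner_cases hb hγ (by linarith) with eq | rfl | h₀ | h₀ | h₀
    · exact .inl eq
    · rw [inner_neg_right] at aγ
      linarith
    all_goals exact .inr (by rcases long with long | long | long <;> linarith)
  rcases hΦ.inner_cases ha hβ (by linarith) with rfl | rfl | zero | pos | neg
  · exact ha'
  · exact neg_mem ha'
  · exact absurd zero ne
  · exact of_pos β hβ β_norm (by linarith)
  · exact neg_mem_iff.mp (of_pos (-β) (hΦ.neg_mem hβ) (by rwa [inner_neg_neg])
      (by rw [inner_neg_right]; linarith))

lemma mem_span_pair (h : HasTwoLengths Φ N 3) {a b : E} (ha : a ∈ Φ) (hb : b ∈ Φ)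
    (a_norm : ⟪a, a⟫_ℝ = N) (b_norm : ⟪b, b⟫_ℝ = N) (hab : a + b ∈ Φ) (two_mul : 2 * ⟪a, b⟫_ℝ = N)
    (hβ : β ∈ Φ) (ne : ⟪a, β⟫_ℝ ≠ 0) : β ∈ span ℝ {a, b} := by
  have hΦ := h.isEuclideanRootSystem
  have N_pos := h.pos
  have short : ∀ γ ∈ Φ, ⟪γ, γ⟫_ℝ = N → ⟪a, γ⟫_ℝ ≠ 0 → γ ∈ span ℝ {a, b} :=
    fun γ => h.mem_span_pair_of_short ha hb a_norm b_norm hab two_mul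
  have of_pos : ∀ γ ∈ Φ, ⟪γ, γ⟫_ℝ = 3 * N → 2 * ⟪a, γ⟫_ℝ = 3 * N → γ ∈ span ℝ {a, b} := by
    intro γ hγ γ_norm aγ
    have : a - γ ∈ span ℝ {a, b} := short _ (hΦ.sub_mem hγ ha (by rw [real_inner_comm]; linarith))
      (by rw [real_inner_sub_sub_self]; linarith) (by rw [inner_sub_right]; linarith)
    exact (Submodule.sub_mem_iff_right _ (Submodule.subset_span (.inl rfl))).mp this
  rcases h.inner_self β hβ with β_norm | β_norm
  · exact short β hβ β_norm ne
  rcases hΦ.inner_cases ha hβ (by linarith) with rfl | rfl | zero | pos | neg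
  · linarith
  · rw [inner_neg_neg] at β_norm
    linarith
  · exact absurd zero ne
  · exact of_pos β hβ β_norm (by linarith)
  · exact neg_mem_iff.mp (of_pos (-β) (hΦ.neg_mem hβ) (by rwa [inner_neg_neg])
      (by rw [inner_neg_right]; linarith))

lemma finrank_span_le_two (h : HasTwoLengths Φ N 3) : finrank ℝ (span ℝ (Φ : Set E)) ≤ 2 := by
  have hΦ := h.isEuclideanRootSystem
  have N_pos := h.pos
  obtain ⟨a, ha, a_norm⟩ := h.exists_short
  obtain ⟨β, hβ, β_norm⟩ := h.exists_long
  obtain ⟨γ, hγ, -, γ_norm, pos⟩ := hΦ.exists_inner_pos h.isIndecomposable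
    (p := fun _ => True) (fun _ _ _ _ => id) hβ trivial ha
  rw [β_norm] at γ_norm
  have aγ : 2 * ⟪γ, a⟫_ℝ = 3 * N := by
    rw [real_inner_comm] at pos ⊢
    rw [(hΦ.two_mul_inner_eq_of_inner_pos ha hγ (by linarith) pos (by rintro rfl; linarith)).1,
      γ_norm]
  have hb : γ - a ∈ Φ := by
    simpa using hΦ.neg_mem (hΦ.sub_mem hγ ha (by rw [aγ, γ_norm]))
  have b_norm : ⟪γ - a, γ - a⟫_ℝ = N := by
    rw [real_inner_sub_sub_self]
    linarith
  have ab : 2 * ⟪a, γ - a⟫_ℝ = N := by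
    rw [inner_sub_right, real_inner_comm]
    linarith
  have subset_span := h.isIndecomposable.subset_span (F := {a, γ - a})
    (Set.insert_subset ha (Set.singleton_subset_iff.mpr hb)) ⟨a, .inl rfl⟩ ?_
  · calc finrank ℝ (span ℝ (Φ : Set E))
        ≤ finrank ℝ (span ℝ (({a, γ - a} : Finset E) : Set E)) :=
          Submodule.finrank_mono (Submodule.span_le.mpr (by simpa using subset_span))
      _ ≤ 2 := (finrank_span_finset_le_card _).trans Finset.card_le_two
  rintro f (rfl | rfl) δ hδ ne
  · exact h.mem_span_pair ha hb a_norm b_norm (by simpa) ab hδ ne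
  · rw [Set.pair_comm]
    exact h.mem_span_pair hb ha b_norm a_norm (by simpa) (by rwa [real_inner_comm]) hδ ne

lemma card_add_card_le_of_three (h : HasTwoLengths Φ N 3) (L : E →ₗ[ℝ] T) {κ₁ κ₂ : T}
    (hκ : LinearIndependent ℝ ![κ₁, κ₂]) :
    (Φ.filter fun α => ⟪α, α⟫_ℝ = N ∧ L α = κ₁).card +
      (Φ.filter fun α => ⟪α, α⟫_ℝ = 3 * N ∧ L α = κ₂).card ≤
        (Φ.filter (L · = 0)).card + finrank ℝ (span ℝ (Φ : Set E)) := by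
  have hΦ := h.isEuclideanRootSystem
  rcases (Φ.filter fun α => ⟪α, α⟫_ℝ = N ∧ L α = κ₁).eq_empty_or_nonempty with empty | ⟨α, hα⟩
  · rw [empty, Finset.card_empty, zero_add]
    exact hΦ.card_inner_self_eq_le L (hκ.ne_zero 1) _
  rcases (Φ.filter fun α => ⟪α, α⟫_ℝ = 3 * N ∧ L α = κ₂).eq_empty_or_nonempty
    with empty | ⟨β, hβ⟩
  · rw [empty, Finset.card_empty, add_zero]
    exact hΦ.card_inner_self_eq_le L (hκ.ne_zero 0) _
  obtain ⟨hα, -, Lα⟩ := Finset.mem_filter.mp hα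
  obtain ⟨hβ, -, Lβ⟩ := Finset.mem_filter.mp hβ
  let L' := L.domRestrict (span ℝ (Φ : Set E))
  have two_le : 2 ≤ finrank ℝ L'.range := by
    have card_eq := finrank_span_eq_card hκ
    rw [Fintype.card_fin] at card_eq
    refine card_eq.ge.trans ?_
    refine Submodule.finrank_mono (Submodule.span_le.mpr ?_)
    rintro _ ⟨i, rfl⟩
    fin_cases i
    exacts [⟨⟨α, Submodule.subset_span hα⟩, Lα⟩, ⟨⟨β, Submodule.subset_span hβ⟩, Lβ⟩]
  have rank_nullity := L'.finrank_range_add_finrank_ker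
  have finrank_le := h.finrank_span_le_two
  have L'_inj : Function.Injective L' :=
    LinearMap.ker_eq_bot.mp (Submodule.finrank_eq_zero.mp (by omega))
  have card_le_one (M : ℝ) (κ : T) : (Φ.filter fun α => ⟪α, α⟫_ℝ = M ∧ L α = κ).card ≤ 1 :=
    Finset.card_le_one.mpr fun γ hγ δ hδ => by
      rw [Finset.mem_filter] at hγ hδ
      exact congrArg Subtype.val (@L'_inj ⟨γ, Submodule.subset_span hγ.1⟩
        ⟨δ, Submodule.subset_span hδ.1⟩ (hγ.2.2.trans hδ.2.2.symm))
  have := card_le_one N κ₁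
  have := card_le_one (3 * N) κ₂
  omega

lemma inner_short_long (h : HasTwoLengths Φ N 2) (hα : α ∈ Φ) (α_norm : ⟪α, α⟫_ℝ = N)
    (hβ : β ∈ Φ) (β_norm : ⟪β, β⟫_ℝ = 2 * N) :
    ⟪α, β⟫_ℝ = 0 ∨ ⟪α, β⟫_ℝ = N ∨ ⟪α, β⟫_ℝ = -N := by
  have N_pos := h.pos
  rcases h.isEuclideanRootSystem.inner_cases hα hβ (by linarith) with rfl | rfl | h₀ | h₀ | h₀
  · linarith
  · rw [inner_neg_neg] at β_norm
    linarith
  · exact .inl h₀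
  · exact .inr (.inl (by linarith))
  · exact .inr (.inr (by linarith))

lemma exists_inner_eq (h : HasTwoLengths Φ N 2) (hα : α ∈ Φ) (α_norm : ⟪α, α⟫_ℝ = N) :
    ∃ β ∈ Φ, ⟪β, β⟫_ℝ = 2 * N ∧ ⟪α, β⟫_ℝ = N := by
  obtain ⟨β, hβ, β_norm⟩ := h.exists_long
  obtain ⟨γ, hγ, -, γ_norm, pos⟩ := h.isEuclideanRootSystem.exists_inner_pos h.isIndecomposable
    (p := fun _ => True) (fun _ _ _ _ => id) hβ trivial hα
  have N_pos := h.pos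
  rw [real_inner_comm] at pos
  refine ⟨γ, hγ, γ_norm.trans β_norm, ?_⟩
  rcases h.inner_short_long hα α_norm hγ (γ_norm.trans β_norm) with h₀ | h₀ | h₀ <;> linarith

lemma sub_mem_of_inner_eq (h : HasTwoLengths Φ N 2) (hα : α ∈ Φ) (hβ : β ∈ Φ)
    (β_norm : ⟪β, β⟫_ℝ = 2 * N) (inner_eq : ⟪α, β⟫_ℝ = N) : β - α ∈ Φ := by
  have hΦ := h.isEuclideanRootSystem
  simpa using hΦ.neg_mem (hΦ.sub_mem hβ hα (by rw [real_inner_comm]; linarith))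

end HasTwoLengths

lemma IsEuclideanRootSystem.add_mem_iff_sub_mem (hΦ : IsEuclideanRootSystem Φ) (hβ : β ∈ Φ)
    (orth : ⟪α, β⟫_ℝ = 0) : α + β ∈ Φ ↔ α - β ∈ Φ := by
  rw [real_inner_comm] at orth
  refine ⟨fun h => ?_, fun h => ?_⟩
  · have := hΦ.sub_smul_mem hβ h (c := 2) (by rw [inner_add_right, orth, zero_add])
    rwa [two_smul, add_sub_add_right_eq_sub] at this
  · have := hΦ.sub_smul_mem hβ h (c := -2) (by rw [inner_sub_right, orth]; ring)
    rwa [neg_smul, sub_neg_eq_add, two_smul, sub_add_add_cancel] at this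

/-- There are two roots of squared length `M` at an angle of 60°. -/
def HasAcutePair (Φ : Finset E) (M : ℝ) : Prop :=
  ∃ α ∈ Φ, ∃ β ∈ Φ, ⟪α, α⟫_ℝ = M ∧ ⟪β, β⟫_ℝ = M ∧ 2 * ⟪α, β⟫_ℝ = M

lemma HasAcutePair.exists_of_inner_self_eq {M : ℝ} (h : HasAcutePair Φ M)
    (hΦ : IsEuclideanRootSystem Φ) (hΦ' : IsIndecomposable Φ) (hα : α ∈ Φ)
    (α_norm : ⟪α, α⟫_ℝ = M) : ∃ β ∈ Φ, ⟪β, β⟫_ℝ = M ∧ 2 * ⟪α, β⟫_ℝ = M := by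
  obtain ⟨γ, hγ, δ, hδ, γ_norm, δ_norm, γδ⟩ := h
  refine hΦ.of_inner_self_eq hΦ' (p := fun α => ∃ β ∈ Φ, ⟪β, β⟫_ℝ = M ∧ 2 * ⟪α, β⟫_ℝ = M) ?_ hγ
    ⟨δ, hδ, δ_norm, γδ⟩ hα (α_norm.trans γ_norm.symm)
  rintro ε hε β - ⟨ζ, hζ, ζ_norm, βζ⟩
  exact ⟨_, hΦ.reflection_mem ε hε ζ hζ,
    (inner_self_reflection ε ζ).trans ζ_norm, by
    rwa [LinearIsometryEquiv.inner_map_map]⟩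

/-- The roots of the same length as `e` which are strongly orthogonal to `e`: they are orthogonal
to `e` and their sum with `e` is not a root. -/
def stronglyOrthogonal (Φ : Finset E) (e : E) : Set E :=
  {f | f ∈ Φ ∧ ⟪f, f⟫_ℝ = ⟪e, e⟫_ℝ ∧ ⟪e, f⟫_ℝ = 0 ∧ e + f ∉ Φ}

namespace HasTwoLengths

variable {e f g x : E}

lemma add_mem_or_inner_eq_zero (h : HasTwoLengths Φ N 2) (e_norm : ⟪e, e⟫_ℝ = N) (hf : f ∈ Φ)
    (f_norm : ⟪f, f⟫_ℝ = N) (ef : ⟪e, f⟫_ℝ = 0) (hg : g ∈ Φ) (g_norm : ⟪g, g⟫_ℝ = N)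
    (eg : ⟪e, g⟫_ℝ = 0) (add_mem : e + g ∈ Φ) : e + f ∈ Φ ∨ ⟪f, g⟫_ℝ = 0 := by
  have hΦ := h.isEuclideanRootSystem
  have inner_add : ⟪f, e + g⟫_ℝ = ⟪f, g⟫_ℝ := by
    rw [inner_add_right, real_inner_comm, ef, zero_add]
  rcases h.inner_short_long hf f_norm add_mem (by rw [real_inner_add_add_self]; linarith)
    with zero | pos | neg
  · exact .inr (inner_add ▸ zero)
  · rw [hΦ.eq_of_inner_eq hf hg (by linarith) (by linarith)] at add_mem
    exact .inl add_mem
  · have := hΦ.eq_of_inner_eq hf (hΦ.neg_mem hg) (by rw [inner_neg_neg]; linarith)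
      (by rw [inner_neg_right]; linarith)
    rw [hΦ.add_mem_iff_sub_mem hf ef, ← this, sub_neg_eq_add]
    exact .inl add_mem

lemma sub_mem_stronglyOrthogonal (h : HasTwoLengths Φ N 2) (he : e ∈ Φ) (e_norm : ⟪e, e⟫_ℝ = N)
    (hf : f ∈ stronglyOrthogonal Φ e) (hβ : β ∈ Φ) (β_norm : ⟪β, β⟫_ℝ = 2 * N)
    (fβ : ⟪f, β⟫_ℝ = N) : β - f ∈ stronglyOrthogonal Φ e := by
  have hΦ := h.isEuclideanRootSystem
  obtain ⟨hf, f_norm, ef, ef_notMem⟩ := hf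
  rw [e_norm] at f_norm
  have hg := h.sub_mem_of_inner_eq hf hβ β_norm fβ
  have g_norm : ⟪β - f, β - f⟫_ℝ = N := by
    rw [real_inner_sub_sub_self, real_inner_comm f, fβ]
    linarith
  have fg : ⟪f, β - f⟫_ℝ = 0 := by rw [inner_sub_right, fβ, f_norm, sub_self]
  have eg := (h.add_mem_or_inner_eq_zero f_norm he e_norm (by rwa [real_inner_comm]) hg g_norm fg
    (by rwa [add_sub_cancel])).resolve_left (add_comm f e ▸ ef_notMem)
  refine ⟨hg, g_norm.trans e_norm.symm, eg, fun add_mem => ef_notMem ?_⟩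
  rw [hΦ.add_mem_iff_sub_mem hf ef]
  convert hΦ.sub_mem hβ add_mem ?_ using 1
  · abel
  · rw [inner_sub_right, ef, sub_zero] at eg
    rw [inner_add_right, inner_sub_right, real_inner_comm e, real_inner_comm f, eg, fβ, β_norm]
    ring

lemma exists_orthogonal_triple (h : HasTwoLengths Φ N 2) (hlong : HasAcutePair Φ (2 * N))
    (he : e ∈ Φ) (e_norm : ⟪e, e⟫_ℝ = N) :
    ∃ g ∈ Φ, ∃ k ∈ Φ, ⟪g, g⟫_ℝ = N ∧ ⟪k, k⟫_ℝ = N ∧ ⟪e, g⟫_ℝ = 0 ∧ ⟪e, k⟫_ℝ = 0 ∧ ⟪g, k⟫_ℝ = 0 ∧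
      e + g ∈ Φ ∧ e + k ∈ Φ := by
  have hΦ := h.isEuclideanRootSystem
  have N_pos := h.pos
  obtain ⟨γ, hγ, γ_norm, eγ⟩ := h.exists_inner_eq he e_norm
  obtain ⟨δ, hδ, δ_norm, γδ⟩ := hlong.exists_of_inner_self_eq hΦ h.isIndecomposable hγ γ_norm
  have hg := h.sub_mem_of_inner_eq he hγ γ_norm eγ
  have g_norm : ⟪γ - e, γ - e⟫_ℝ = N := by
    rw [real_inner_sub_sub_self, real_inner_comm e]
    linarith
  have eg : ⟪e, γ - e⟫_ℝ = 0 := by rw [inner_sub_right, eγ, e_norm, sub_self]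
  have gδ := h.inner_short_long hg g_norm hδ δ_norm
  rw [inner_sub_left] at gδ
  refine ⟨γ - e, hg, ?_⟩
  rcases h.inner_short_long he e_norm hδ δ_norm with eδ | eδ | eδ
  · have hk := h.sub_mem_of_inner_eq hg hδ δ_norm (by rw [inner_sub_left]; linarith)
    have ek : ⟪e, δ - (γ - e)⟫_ℝ = 0 := by rw [inner_sub_right, eδ, eg, sub_zero]
    refine ⟨δ - (γ - e), hk, g_norm, ?_, eg, ek, ?_, by rwa [add_sub_cancel], ?_⟩
    · rw [real_inner_sub_sub_self, g_norm, inner_sub_right, real_inner_comm γ, real_inner_comm e]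
      linarith
    · rw [inner_sub_right, g_norm, inner_sub_left]
      linarith
    · rw [hΦ.add_mem_iff_sub_mem hk ek]
      convert hΦ.sub_mem hδ hγ (by rw [real_inner_comm]; linarith) using 1
      abel
  · have hk := h.sub_mem_of_inner_eq he hδ δ_norm eδ
    refine ⟨δ - e, hk, g_norm, ?_, eg, ?_, ?_, by rwa [add_sub_cancel], by rwa [add_sub_cancel]⟩
    · rw [real_inner_sub_sub_self, real_inner_comm e]
      linarith
    · rw [inner_sub_right, eδ, e_norm, sub_self]
    · rw [inner_sub_right, inner_sub_left, real_inner_comm e (γ - e), eg]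
      linarith
  · rcases gδ with h₀ | h₀ | h₀ <;> linarith

lemma exists_two_mul_inner_eq (h : HasTwoLengths Φ N 2) (e_norm : ⟪e, e⟫_ℝ = N) (hg : g ∈ Φ)
    (g_norm : ⟪g, g⟫_ℝ = N) (eg : ⟪e, g⟫_ℝ = 0) (add_mem : e + g ∈ Φ) (hx : x ∈ Φ)
    (x_norm : ⟪x, x⟫_ℝ = N) (ex : 2 * ⟪e, x⟫_ℝ = N) :
    ∃ g' ∈ Φ, ⟪g', g'⟫_ℝ = N ∧ e + g' ∈ Φ ∧ 2 * ⟪g', x⟫_ℝ = N ∧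
      ∀ v, ⟪v, g⟫_ℝ = 0 → ⟪v, g'⟫_ℝ = 0 := by
  have hΦ := h.isEuclideanRootSystem
  have N_pos := h.pos
  have inner_cases := h.inner_short_long hx x_norm add_mem
    (by rw [real_inner_add_add_self]; linarith)
  rw [inner_add_right, real_inner_comm e, real_inner_comm g] at inner_cases
  rcases inner_cases with zero | pos | neg
  · refine ⟨-g, hΦ.neg_mem hg, by rwa [inner_neg_neg], ?_, by rw [inner_neg_left]; linarith,
      fun v hv => by rw [inner_neg_right, hv, neg_zero]⟩
    rwa [← sub_eq_add_neg, ← hΦ.add_mem_iff_sub_mem hg eg]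
  · exact ⟨g, hg, g_norm, add_mem, by linarith, fun _ => id⟩
  · nlinarith [real_inner_mul_inner_self_le g x]

-- In the coordinates of `F₄`, `x = (e + g + k + f) / 2`; reflecting `e + g` in `x` gives
-- `-(k + f)`, so that `e + f = (e - k) + (k + f)` is a root.
lemma add_mem_of_two_mul_inner_eq (h : HasTwoLengths Φ N 2) (hlong : HasAcutePair Φ (2 * N))
    (he : e ∈ Φ) (e_norm : ⟪e, e⟫_ℝ = N) (hf : f ∈ Φ) (f_norm : ⟪f, f⟫_ℝ = N) (ef : ⟪e, f⟫_ℝ = 0)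
    (hx : x ∈ Φ) (x_norm : ⟪x, x⟫_ℝ = N) (ex : 2 * ⟪e, x⟫_ℝ = N) (fx : 2 * ⟪f, x⟫_ℝ = N) :
    e + f ∈ Φ := by
  have hΦ := h.isEuclideanRootSystem
  obtain ⟨g, hg, k, hk, g_norm, k_norm, eg, ek, gk, eg_mem, ek_mem⟩ :=
    h.exists_orthogonal_triple hlong he e_norm
  obtain ⟨g, hg, g_norm, eg_mem, gx, orth_g⟩ :=
    h.exists_two_mul_inner_eq e_norm hg g_norm eg eg_mem hx x_norm ex
  obtain ⟨k, hk, k_norm, ek_mem, kx, orth_k⟩ :=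
    h.exists_two_mul_inner_eq e_norm hk k_norm ek ek_mem hx x_norm ex
  replace gk := orth_k _ ((real_inner_comm _ _).trans (orth_g _ ((real_inner_comm _ _).trans gk)))
  replace eg := orth_g _ eg
  replace ek := orth_k _ ek
  rcases h.add_mem_or_inner_eq_zero e_norm hf f_norm ef hg g_norm eg eg_mem with done | fg
  · exact done
  rcases h.add_mem_or_inner_eq_zero e_norm hf f_norm ef hk k_norm ek ek_mem with done | fk
  · exact done
  have two_smul_x : (2 : ℝ) • x = e + g + (k + f) := by
    rw [← sub_eq_zero, ← inner_self_eq_zero (𝕜 := ℝ), real_inner_sub_sub_self]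
    simp only [inner_add_left, inner_add_right, real_inner_smul_left, real_inner_smul_right,
      real_inner_comm _ x, real_inner_comm e g, real_inner_comm e k, real_inner_comm e f,
      real_inner_comm g k, real_inner_comm f g, real_inner_comm f k]
    linarith
  have add_mem : k + f ∈ Φ := by
    have := hΦ.sub_smul_mem hx eg_mem (c := 2) (by
      rw [inner_add_right, real_inner_comm e, real_inner_comm g]
      linarith)
    rw [two_smul_x, sub_add_cancel_left] at this
    simpa using hΦ.neg_mem this
  have := hΦ.sub_mem (hΦ.neg_mem add_mem) ((hΦ.add_mem_iff_sub_mem hk ek).mp ek_mem) (by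
    rw [inner_neg_neg, real_inner_add_add_self, inner_neg_left]
    simp only [inner_add_left, inner_sub_right, real_inner_comm k f, real_inner_comm e f,
      real_inner_comm e k]
    linarith)
  convert this using 1
  abel

lemma mem_span_stronglyOrthogonal (h : HasTwoLengths Φ N 2) (he : e ∈ Φ) (e_norm : ⟪e, e⟫_ℝ = N)
    (h60 : HasAcutePair Φ N → HasAcutePair Φ (2 * N))
    (hf : f ∈ stronglyOrthogonal Φ e) (hβ : β ∈ Φ) (fβ : 0 < ⟪f, β⟫_ℝ) :
    β ∈ span ℝ (stronglyOrthogonal Φ e) := by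
  have hΦ := h.isEuclideanRootSystem
  have N_pos := h.pos
  have f_mem := Submodule.subset_span (R := ℝ) hf
  obtain ⟨hfΦ, f_norm, ef, ef_notMem⟩ := id hf
  rw [e_norm] at f_norm
  rcases h.inner_self β hβ with β_norm | β_norm
  swap
  · have fβ : ⟪f, β⟫_ℝ = N := by
      rcases h.inner_short_long hfΦ f_norm hβ β_norm with h₀ | h₀ | h₀ <;> linarith
    rw [← sub_add_cancel β f]
    exact add_mem (Submodule.subset_span
      (h.sub_mem_stronglyOrthogonal he e_norm hf hβ β_norm fβ)) f_mem
  rcases eq_or_ne β f with rfl | ne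
  · exact f_mem
  have fβ := (hΦ.two_mul_inner_eq_of_inner_pos hfΦ hβ (by linarith) fβ ne).1
  rcases hΦ.inner_cases he hβ (by linarith) with rfl | rfl | zero | pos | neg
  · rw [real_inner_comm] at ef
    linarith
  · rw [inner_neg_right, real_inner_comm] at fβ
    linarith
  · refine Submodule.subset_span ⟨hβ, β_norm.trans e_norm.symm, zero, fun add_mem => ?_⟩
    have := h.inner_short_long hfΦ f_norm add_mem (by rw [real_inner_add_add_self]; linarith)
    rw [inner_add_right, real_inner_comm, ef] at this
    rcases this with h₀ | h₀ | h₀ <;> linarith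
  · refine absurd ?_ ef_notMem
    exact h.add_mem_of_two_mul_inner_eq (h60 ⟨f, hfΦ, β, hβ, f_norm, β_norm, by linarith⟩) he
      e_norm hfΦ f_norm ef hβ β_norm (by linarith) (by linarith)
  · have := h.add_mem_of_two_mul_inner_eq (h60 ⟨f, hfΦ, β, hβ, f_norm, β_norm, by linarith⟩)
      (hΦ.neg_mem he) (by rwa [inner_neg_neg]) hfΦ f_norm (by rw [inner_neg_left, ef, neg_zero])
      hβ β_norm (by rw [inner_neg_left]; linarith) (by linarith)
    refine absurd ((hΦ.add_mem_iff_sub_mem hfΦ ef).mpr ?_) ef_notMem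
    simpa [neg_add_eq_sub] using hΦ.neg_mem this

lemma add_mem_of_inner_eq_zero (h : HasTwoLengths Φ N 2)
    (h60 : HasAcutePair Φ N → HasAcutePair Φ (2 * N))
    (he : e ∈ Φ) (e_norm : ⟪e, e⟫_ℝ = N) (hf : f ∈ Φ) (f_norm : ⟪f, f⟫_ℝ = N)
    (ef : ⟪e, f⟫_ℝ = 0) : e + f ∈ Φ := by
  have hΦ := h.isEuclideanRootSystem
  by_contra notMem
  have subset_span := h.isIndecomposable.subset_span (F := stronglyOrthogonal Φ e)
    (fun _ hg => hg.1) ⟨f, hf, f_norm.trans e_norm.symm, ef, notMem⟩ fun g hg β hβ ne => by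
      rcases ne.lt_or_gt with neg | pos
      · exact neg_mem_iff.mp (h.mem_span_stronglyOrthogonal he e_norm h60 hg (hΦ.neg_mem hβ)
          (by rwa [inner_neg_right, neg_pos]))
      · exact h.mem_span_stronglyOrthogonal he e_norm h60 hg hβ pos
  have ortho : span ℝ {e} ⟂ span ℝ (stronglyOrthogonal Φ e) :=
    Submodule.isOrtho_span.mpr fun _ he' g hg => Set.mem_singleton_iff.mp he' ▸ hg.2.2.1
  exact hΦ.ne_zero he (inner_self_eq_zero.mp
    (ortho.inner_eq (Submodule.mem_span_singleton_self e) (subset_span he)))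

end HasTwoLengths

/-- The coroot of `α`, as a vector of the same Euclidean space. -/
def coroot (α : E) : E := (2 / ⟪α, α⟫_ℝ) • α

lemma inner_coroot_coroot (α β : E) :
    ⟪coroot α, coroot β⟫_ℝ = 4 * ⟪α, β⟫_ℝ / (⟪α, α⟫_ℝ * ⟪β, β⟫_ℝ) := by
  rw [coroot, coroot, real_inner_smul_left, real_inner_smul_right]
  ring

lemma inner_self_coroot (α : E) : ⟪coroot α, coroot α⟫_ℝ = 4 / ⟪α, α⟫_ℝ := by
  rw [inner_coroot_coroot]
  rcases eq_or_ne α 0 with rfl | ne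
  · simp
  · rw [mul_div_mul_right _ _ (inner_self_ne_zero.mpr ne)]

lemma inner_self_coroot_eq_iff {M : ℝ} : ⟪coroot α, coroot α⟫_ℝ = 4 / M ↔ ⟪α, α⟫_ℝ = M := by
  rw [inner_self_coroot, div_eq_mul_inv, div_eq_mul_inv, mul_right_inj' four_ne_zero, inv_inj]

lemma coroot_involutive : Function.Involutive (coroot : E → E) := fun α => by
  rw [coroot, inner_self_coroot, coroot, smul_smul]
  rcases eq_or_ne α 0 with rfl | ne
  · rw [smul_zero]
  have := inner_self_ne_zero (𝕜 := ℝ).mpr ne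
  rw [show 2 / (4 / ⟪α, α⟫_ℝ) * (2 / ⟪α, α⟫_ℝ) = 1 by field_simp; norm_num, one_smul]

lemma coroot_smul (c : ℝ) (α : E) : coroot (c • α) = c⁻¹ • coroot α := by
  rw [coroot, coroot, real_inner_smul_left, real_inner_smul_right, smul_smul, smul_smul]
  rcases eq_or_ne c 0 with rfl | hc
  · simp
  · congr 1
    field_simp

lemma reflection_coroot (hα : α ≠ 0) (β : E) :
    (ℝ ∙ coroot α)ᗮ.reflection (coroot β) = coroot ((ℝ ∙ α)ᗮ.reflection β) := by
  have unit : IsUnit (2 / ⟪α, α⟫_ℝ) :=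
    (div_ne_zero two_ne_zero (inner_self_ne_zero (𝕜 := ℝ).mpr hα)).isUnit
  simp only [coroot, Submodule.span_singleton_smul_eq unit, map_smul,
    inner_self_reflection]

lemma span_image_coroot (Φ : Finset E) :
    span ℝ (Φ.image coroot : Set E) = span ℝ (Φ : Set E) := by
  have le (Ψ : Finset E) : span ℝ (Ψ.image coroot : Set E) ≤ span ℝ (Ψ : Set E) := by
    rw [Submodule.span_le, Finset.coe_image]
    rintro _ ⟨α, hα, rfl⟩
    exact Submodule.smul_mem _ _ (Submodule.subset_span hα)
  refine (le Φ).antisymm ?_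
  simpa [Finset.image_image, coroot_involutive.comp_self] using le (Φ.image coroot)

lemma mem_image_coroot : β ∈ Φ.image coroot ↔ coroot β ∈ Φ := by
  conv_lhs => rw [← coroot_involutive β]
  exact coroot_involutive.injective.mem_finset_image

lemma IsEuclideanRootSystem.image_coroot (hΦ : IsEuclideanRootSystem Φ) :
    IsEuclideanRootSystem (Φ.image coroot) := by
  constructor
  · rw [Finset.mem_image]
    rintro ⟨α, hα, eq⟩
    rw [coroot_involutive.eq_iff, coroot, smul_zero] at eq
    exact hΦ.zero_notMem (eq ▸ hα)
  · simp only [Finset.forall_mem_image]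
    intro α hα β hβ
    rw [reflection_coroot (hΦ.ne_zero hα)]
    exact Finset.mem_image_of_mem _ (hΦ.reflection_mem α hα β hβ)
  · simp only [Finset.forall_mem_image]
    intro α hα β hβ
    obtain ⟨z, hz⟩ := hΦ.integral β hβ α hα
    have α_pos := hΦ.inner_self_pos hα
    have β_pos := hΦ.inner_self_pos hβ
    refine ⟨z, ?_⟩
    rw [inner_self_coroot, inner_coroot_coroot, real_inner_comm]
    field_simp
    linear_combination hz
  · intro α hα c hc
    rw [mem_image_coroot] at hα hc
    rw [coroot_smul] at hc
    simpa only [inv_eq_iff_eq_inv, inv_neg, inv_one] using hΦ.reduced _ hα _ hc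

lemma IsIndecomposable.image_coroot (hΦ : IsIndecomposable Φ) :
    IsIndecomposable (Φ.image coroot) := by
  intro Ψ hΨ hne orth
  have subset : Ψ.image coroot ⊆ Φ := fun α hα => by
    simpa only [mem_image_coroot, coroot_involutive α] using hΨ (mem_image_coroot.mp hα)
  have image_eq := hΦ _ subset (hne.image _) fun α hα β hβ hβ' => by
    have := orth (coroot α) (mem_image_coroot.mp hα) (coroot β) (Finset.mem_image_of_mem _ hβ)
      (mt mem_image_coroot.mpr hβ')
    rw [← coroot_involutive α, ← coroot_involutive β, inner_coroot_coroot, this, mul_zero,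
      zero_div]
  rw [← image_eq, Finset.image_image, coroot_involutive.comp_self, Finset.image_id]

lemma HasTwoLengths.image_coroot {r : ℝ} (h : HasTwoLengths Φ N r) :
    HasTwoLengths (Φ.image coroot) (4 / (r * N)) r := by
  obtain ⟨α, hα, α_norm⟩ := h.exists_short
  obtain ⟨β, hβ, β_norm⟩ := h.exists_long
  have rN_pos := β_norm ▸ h.isEuclideanRootSystem.inner_self_pos hβ
  have N_pos := h.pos
  have scale : 4 / N = r * (4 / (r * N)) := by
    have := (pos_of_mul_pos_left rN_pos N_pos.le).ne'
    field_simp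
  refine ⟨h.isEuclideanRootSystem.image_coroot, h.isIndecomposable.image_coroot,
    ⟨_, Finset.mem_image_of_mem _ hβ, by rw [inner_self_coroot, β_norm]⟩,
    ⟨_, Finset.mem_image_of_mem _ hα, by rw [inner_self_coroot, α_norm, scale]⟩, ?_⟩
  simp only [Finset.forall_mem_image, inner_self_coroot]
  intro γ hγ
  rcases h.inner_self γ hγ with γ_norm | γ_norm
  · exact .inr (by rw [γ_norm, scale])
  · exact .inl (by rw [γ_norm])

lemma hasAcutePair_image_coroot {M : ℝ} (hM : M ≠ 0) :
    HasAcutePair (Φ.image coroot) (4 / M) ↔ HasAcutePair Φ M := by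
  simp only [HasAcutePair, Finset.exists_mem_image, inner_self_coroot_eq_iff]
  refine exists_congr fun α => and_congr_right fun _ => exists_congr fun β =>
    and_congr_right fun _ => and_congr_right fun α_norm => and_congr_right fun β_norm => ?_
  rw [inner_coroot_coroot, α_norm, β_norm]
  field_simp

lemma card_filter_image_coroot {M : ℝ} (hM : M ≠ 0) (Φ : Finset E) (L : E →ₗ[ℝ] T) (κ : T) :
    ((Φ.image coroot).filter fun α => ⟪α, α⟫_ℝ = 4 / M ∧ L α = (2 / M) • κ).card =
      (Φ.filter fun α => ⟪α, α⟫_ℝ = M ∧ L α = κ).card := by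
  rw [Finset.filter_image, Finset.card_image_of_injective _ coroot_involutive.injective]
  simp only [inner_self_coroot_eq_iff]
  refine congrArg Finset.card (Finset.filter_congr fun α _ => and_congr_right fun α_norm => ?_)
  rw [coroot, map_smul, α_norm, smul_right_inj (div_ne_zero two_ne_zero hM)]

lemma card_filter_image_coroot_eq_zero (Φ : Finset E) (L : E →ₗ[ℝ] T) :
    ((Φ.image coroot).filter (L · = 0)).card = (Φ.filter (L · = 0)).card := by
  rw [Finset.filter_image, Finset.card_image_of_injective _ coroot_involutive.injective]
  refine congrArg Finset.card (Finset.filter_congr fun α _ => ?_)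
  rcases eq_or_ne α 0 with rfl | ne
  · simp [coroot]
  · rw [coroot, map_smul, smul_eq_zero_iff_right]
    exact div_ne_zero two_ne_zero (inner_self_ne_zero.mpr ne)

/-- The roots orthogonal to every element of `J`. -/
def orthogonalRoots (Φ J : Finset E) : Finset E :=
  Φ.filter fun γ => ∀ σ ∈ J, ⟪σ, γ⟫_ℝ = 0

lemma IsEuclideanRootSystem.orthogonalRoots (hΦ : IsEuclideanRootSystem Φ) (J : Finset E) :
    IsEuclideanRootSystem (orthogonalRoots Φ J) := by
  refine hΦ.of_subset (Finset.filter_subset _ _) fun α hα β hβ => ?_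
  obtain ⟨hα, orth_α⟩ := Finset.mem_filter.mp hα
  obtain ⟨hβ, orth_β⟩ := Finset.mem_filter.mp hβ
  obtain ⟨z, hz⟩ := hΦ.integral α hα β hβ
  refine Finset.mem_filter.mpr ⟨hΦ.reflection_mem α hα β hβ, fun σ hσ => ?_⟩
  rw [reflection_eq_sub_smul hz, inner_sub_right, real_inner_smul_right, orth_α σ hσ,
    orth_β σ hσ, mul_zero, sub_zero]

lemma card_le_finrank_span (hΦ : (0 : E) ∉ Φ)
    (orth : ∀ σ ∈ Φ, ∀ τ ∈ Φ, σ ≠ τ → ⟪σ, τ⟫_ℝ = 0) : Φ.card ≤ finrank ℝ (span ℝ (Φ : Set E)) := by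
  have independent : LinearIndependent ℝ fun σ : Φ => (σ : E) :=
    linearIndependent_of_ne_zero_of_inner_eq_zero (fun σ => ne_of_mem_of_not_mem σ.2 hΦ)
      fun σ τ ne => orth σ σ.2 τ τ.2 (Subtype.coe_ne_coe.mpr ne)
  exact (finrank_span_finset_eq_card independent).ge

lemma card_orthogonalRoots_add_card_le (hΦ : IsEuclideanRootSystem Φ) {J : Finset E} (hJ : J ⊆ Φ)
    (orth : ∀ σ ∈ J, ∀ τ ∈ J, σ ≠ τ → ⟪σ, τ⟫_ℝ = 0) (L : E →ₗ[ℝ] T) {κ : T} (hκ : κ ≠ 0) :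
    ((orthogonalRoots Φ J).filter (L · = κ)).card + J.card ≤
      ((orthogonalRoots Φ J).filter (L · = 0)).card + finrank ℝ (span ℝ (Φ : Set E)) := by
  have rank := finrank_span_add_finrank_span_le hJ (Finset.filter_subset _ Φ)
    fun σ hσ γ (hγ : γ ∈ orthogonalRoots Φ J) => (Finset.mem_filter.mp hγ).2 σ hσ
  have card_J := card_le_finrank_span (mt (@hJ 0) hΦ.zero_notMem) orth
  have count := card_apply_eq_le (hΦ.orthogonalRoots J) L hκ
  rw [orthogonalRoots] at count ⊢
  omega

/-- The short roots at which `L` takes a value in `κ₁ + ℤ κ₂`. -/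
def ladder (Φ : Finset E) (N : ℝ) (L : E →ₗ[ℝ] T) (κ₁ κ₂ : T) : Finset E :=
  Φ.filter fun σ => ⟪σ, σ⟫_ℝ = N ∧ ∃ j : ℤ, L σ = κ₁ + j • κ₂

namespace HasTwoLengths

variable {L : E →ₗ[ℝ] T} {κ₁ κ₂ : T} {σ τ γ : E}

lemma inner_eq_zero_of_mem_ladder (h : HasTwoLengths Φ N 2) (hshort : ¬HasAcutePair Φ N)
    (hκ : LinearIndependent ℝ ![κ₁, κ₂]) (hσ : σ ∈ ladder Φ N L κ₁ κ₂)
    (hτ : τ ∈ ladder Φ N L κ₁ κ₂) (ne : σ ≠ τ) : ⟪σ, τ⟫_ℝ = 0 := by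
  have hΦ := h.isEuclideanRootSystem
  obtain ⟨hσ, σ_norm, i, Lσ⟩ := Finset.mem_filter.mp hσ
  obtain ⟨hτ, τ_norm, j, Lτ⟩ := Finset.mem_filter.mp hτ
  rcases hΦ.inner_cases hσ hτ (σ_norm.trans τ_norm.symm).le with eq | rfl | zero | acute | obtuse
  · exact absurd eq.symm ne
  · have relation : (2 : ℝ) • κ₁ + (i + j : ℝ) • κ₂ = 0 := by
      rw [map_neg, Lσ, ← sub_eq_zero] at Lτ
      simp only [← Int.cast_smul_eq_zsmul ℝ] at Lτ
      rw [← neg_eq_zero, ← Lτ]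
      module
    exact absurd (LinearIndependent.pair_iff.mp hκ _ _ relation).1 two_ne_zero
  · exact zero
  · exact absurd ⟨σ, hσ, τ, hτ, σ_norm, τ_norm, acute.trans τ_norm⟩ hshort
  · refine absurd ⟨σ, hσ, -τ, hΦ.neg_mem hτ, σ_norm, by rwa [inner_neg_neg], ?_⟩ hshort
    rw [inner_neg_right]
    linarith

lemma sub_mem_of_mem_ladder (h : HasTwoLengths Φ N 2) (hshort : ¬HasAcutePair Φ N)
    (hκ : LinearIndependent ℝ ![κ₁, κ₂]) (hσ : σ ∈ ladder Φ N L κ₁ κ₂)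
    (hτ : τ ∈ ladder Φ N L κ₁ κ₂) (ne : σ ≠ τ) : σ - τ ∈ Φ := by
  have orth := h.inner_eq_zero_of_mem_ladder hshort hκ hσ hτ ne
  obtain ⟨hσ, σ_norm, -⟩ := Finset.mem_filter.mp hσ
  obtain ⟨hτ, τ_norm, -⟩ := Finset.mem_filter.mp hτ
  exact (h.isEuclideanRootSystem.add_mem_iff_sub_mem hτ orth).mp
    (h.add_mem_of_inner_eq_zero (absurd · hshort) hσ σ_norm hτ τ_norm orth)

lemma exists_eq_sub_of_inner_ne_zero (h : HasTwoLengths Φ N 2) (hγ : γ ∈ Φ)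
    (γ_norm : ⟪γ, γ⟫_ℝ = 2 * N) (Lγ : L γ = κ₂) (hσ : σ ∈ ladder Φ N L κ₁ κ₂)
    (ne : ⟪σ, γ⟫_ℝ ≠ 0) : ∃ τ ∈ ladder Φ N L κ₁ κ₂, ∃ τ' ∈ ladder Φ N L κ₁ κ₂,
      L τ = L τ' + κ₂ ∧ τ - τ' = γ := by
  have hΦ := h.isEuclideanRootSystem
  obtain ⟨hσΦ, σ_norm, j, Lσ⟩ := Finset.mem_filter.mp hσ
  rcases h.inner_short_long hσΦ σ_norm hγ γ_norm with zero | pos | neg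
  · exact absurd zero ne
  · have mem : σ - γ ∈ ladder Φ N L κ₁ κ₂ := by
      refine Finset.mem_filter.mpr ⟨?_, ?_, j - 1, ?_⟩
      · rw [← neg_sub]
        exact hΦ.neg_mem (h.sub_mem_of_inner_eq hσΦ hγ γ_norm pos)
      · rw [real_inner_sub_sub_self]
        linarith
      · rw [map_sub, Lσ, Lγ, sub_zsmul, one_zsmul, ← sub_eq_add_neg, add_sub_assoc]
    exact ⟨σ, hσ, σ - γ, mem, by rw [map_sub, Lγ, sub_add_cancel], sub_sub_cancel σ γ⟩
  · have mem : σ + γ ∈ ladder Φ N L κ₁ κ₂ := by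
      refine Finset.mem_filter.mpr ⟨?_, ?_, j + 1, ?_⟩
      · have := h.sub_mem_of_inner_eq hσΦ (hΦ.neg_mem hγ) (by rwa [inner_neg_neg])
          (by rw [inner_neg_right, neg, neg_neg])
        simpa using hΦ.neg_mem this
      · rw [real_inner_add_add_self]
        linarith
      · rw [map_add, Lσ, Lγ, add_zsmul, one_zsmul, add_assoc]
    exact ⟨σ + γ, mem, σ, hσ, by rw [map_add, Lγ], add_sub_cancel_left σ γ⟩

lemma card_offDiag_add_card_orthogonalRoots_le (h : HasTwoLengths Φ N 2)
    (hshort : ¬HasAcutePair Φ N) (hκ : LinearIndependent ℝ ![κ₁, κ₂]) :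
    ((ladder Φ N L κ₁ κ₂).offDiag.filter fun p => L p.1 = L p.2).card +
      ((orthogonalRoots Φ (ladder Φ N L κ₁ κ₂)).filter (L · = 0)).card ≤
      (Φ.filter (L · = 0)).card := by
  set J := ladder Φ N L κ₁ κ₂
  have orth {σ τ : E} (hσ : σ ∈ J) (hτ : τ ∈ J) (ne : σ ≠ τ) : ⟪σ, τ⟫_ℝ = 0 :=
    h.inner_eq_zero_of_mem_ladder hshort hκ hσ hτ ne
  have J_norm {σ : E} (hσ : σ ∈ J) : ⟪σ, σ⟫_ℝ = N := (Finset.mem_filter.mp hσ).2.1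
  have inner_sub {σ τ : E} (hσ : σ ∈ J) (hτ : τ ∈ J) (ne : σ ≠ τ) : ⟪σ, σ - τ⟫_ℝ = N := by
    rw [inner_sub_right, J_norm hσ, orth hσ hτ ne, sub_zero]
  rw [← Finset.card_image_of_injOn (f := fun p : E × E => p.1 - p.2),
    ← Finset.card_union_of_disjoint]
  · refine Finset.card_le_card (Finset.union_subset (fun γ hγ => ?_)
      (Finset.filter_subset_filter _ (Finset.filter_subset _ _)))
    obtain ⟨⟨σ, τ⟩, hp, rfl⟩ := Finset.mem_image.mp hγ
    obtain ⟨hp, L_eq⟩ := Finset.mem_filter.mp hp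
    obtain ⟨hσ, hτ, ne⟩ := Finset.mem_offDiag.mp hp
    exact Finset.mem_filter.mpr ⟨h.sub_mem_of_mem_ladder hshort hκ hσ hτ ne,
      by rw [map_sub, L_eq, sub_self]⟩
  · refine Finset.disjoint_left.mpr fun γ hγ hγ' => ?_
    obtain ⟨⟨σ, τ⟩, hp, rfl⟩ := Finset.mem_image.mp hγ
    obtain ⟨hσ, hτ, ne⟩ := Finset.mem_offDiag.mp (Finset.mem_filter.mp hp).1
    have := (Finset.mem_filter.mp (Finset.mem_filter.mp hγ').1).2 σ hσ
    exact h.pos.ne' ((inner_sub hσ hτ ne).symm.trans this)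
  · rintro ⟨σ, τ⟩ hp ⟨σ', τ'⟩ hp' eq
    obtain ⟨hσ, hτ, ne⟩ := Finset.mem_offDiag.mp (Finset.mem_filter.mp hp).1
    obtain ⟨hσ', hτ', -⟩ := Finset.mem_offDiag.mp (Finset.mem_filter.mp hp').1
    change σ - τ = σ' - τ' at eq
    obtain rfl : σ = σ' := by
      by_contra ne'
      have inner_eq := inner_sub hσ hτ ne
      rw [eq, inner_sub_right, orth hσ hσ' ne', zero_sub, neg_eq_iff_eq_neg] at inner_eq
      have := h.pos
      rcases eq_or_ne σ τ' with rfl | ne_τ'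
      · linarith [J_norm hσ]
      · linarith [orth hσ hτ' ne_τ']
    rw [sub_right_injective eq]

lemma card_long_le_card_orthogonalRoots_add (h : HasTwoLengths Φ N 2) :
    (Φ.filter fun α => ⟪α, α⟫_ℝ = 2 * N ∧ L α = κ₂).card ≤
      ((orthogonalRoots Φ (ladder Φ N L κ₁ κ₂)).filter (L · = κ₂)).card +
        ((ladder Φ N L κ₁ κ₂ ×ˢ ladder Φ N L κ₁ κ₂).filter fun p => L p.1 = L p.2 + κ₂).card := by
  refine (Finset.card_le_card (t := _ ∪ Finset.image (fun p : E × E => p.1 - p.2) _) ?_).trans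
    ((Finset.card_union_le _ _).trans (Nat.add_le_add_left Finset.card_image_le _))
  intro γ hγ
  obtain ⟨hγ, γ_norm, Lγ⟩ := Finset.mem_filter.mp hγ
  rw [Finset.mem_union]
  by_cases orth : ∀ σ ∈ ladder Φ N L κ₁ κ₂, ⟪σ, γ⟫_ℝ = 0
  · exact .inl (Finset.mem_filter.mpr ⟨Finset.mem_filter.mpr ⟨hγ, orth⟩, Lγ⟩)
  push Not at orth
  obtain ⟨σ, hσ, ne⟩ := orth
  obtain ⟨τ, hτ, τ', hτ', L_eq, rfl⟩ := h.exists_eq_sub_of_inner_ne_zero hγ γ_norm Lγ hσ ne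
  exact .inr (Finset.mem_image.mpr
    ⟨(τ, τ'), Finset.mem_filter.mpr ⟨Finset.mk_mem_product hτ hτ', L_eq⟩, rfl⟩)

lemma card_add_card_le_of_not_hasAcutePair_short (h : HasTwoLengths Φ N 2)
    (hshort : ¬HasAcutePair Φ N) (L : E →ₗ[ℝ] T) (hκ : LinearIndependent ℝ ![κ₁, κ₂]) :
    (Φ.filter fun α => ⟪α, α⟫_ℝ = N ∧ L α = κ₁).card +
      (Φ.filter fun α => ⟪α, α⟫_ℝ = 2 * N ∧ L α = κ₂).card ≤
        (Φ.filter (L · = 0)).card + finrank ℝ (span ℝ (Φ : Set E)) := by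
  set J := ladder Φ N L κ₁ κ₂ with J_def
  have short : (Φ.filter fun α => ⟪α, α⟫_ℝ = N ∧ L α = κ₁).card ≤ (J.filter (L · = κ₁)).card :=
    Finset.card_le_card fun α hα => by
      obtain ⟨hα, α_norm, Lα⟩ := Finset.mem_filter.mp hα
      exact Finset.mem_filter.mpr ⟨Finset.mem_filter.mpr ⟨hα, α_norm, 0, by simpa using Lα⟩, Lα⟩
  have long := h.card_long_le_card_orthogonalRoots_add (L := L) (κ₁ := κ₁) (κ₂ := κ₂)
  have levels := card_filter_apply_add_card_pairs_le J L (hκ.ne_zero 1)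
    fun σ hσ => (Finset.mem_filter.mp hσ).2.2
  have pairs : ((J ×ˢ J).filter fun p => L p.1 = L p.2).card ≤
      J.card + (J.offDiag.filter fun p => L p.1 = L p.2).card := by
    rw [← Finset.diag_union_offDiag, Finset.filter_union, ← Finset.diag_card J]
    exact (Finset.card_union_le _ _).trans
      (Nat.add_le_add_right (Finset.card_le_card (Finset.filter_subset _ _)) _)
  have zeros := h.card_offDiag_add_card_orthogonalRoots_le hshort hκ (L := L)
  have orthogonal := card_orthogonalRoots_add_card_le h.isEuclideanRootSystem
    (J := J) (Finset.filter_subset _ _)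
    (fun σ hσ τ hτ => h.inner_eq_zero_of_mem_ladder hshort hκ hσ hτ) L (hκ.ne_zero 1)
  simp only [Matrix.cons_val_one, Matrix.cons_val_fin_one, ← J_def] at long levels orthogonal zeros
  omega

lemma card_add_card_le_of_not_hasAcutePair_long (h : HasTwoLengths Φ N 2)
    (hlong : ¬HasAcutePair Φ (2 * N)) (L : E →ₗ[ℝ] T) (hκ : LinearIndependent ℝ ![κ₁, κ₂]) :
    (Φ.filter fun α => ⟪α, α⟫_ℝ = N ∧ L α = κ₁).card +
      (Φ.filter fun α => ⟪α, α⟫_ℝ = 2 * N ∧ L α = κ₂).card ≤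
        (Φ.filter (L · = 0)).card + finrank ℝ (span ℝ (Φ : Set E)) := by
  have N_pos := h.pos
  have hκ' : LinearIndependent ℝ ![(2 / (2 * N)) • κ₂, (2 / N) • κ₁] := by
    rw [LinearIndependent.pair_iff] at hκ ⊢
    intro a b hab
    rw [smul_smul, smul_smul, add_comm] at hab
    obtain ⟨hb, ha⟩ := hκ _ _ hab
    exact ⟨(mul_eq_zero.mp ha).resolve_right (by positivity),
      (mul_eq_zero.mp hb).resolve_right (by positivity)⟩
  have bound := h.image_coroot.card_add_card_le_of_not_hasAcutePair_short
    (by rwa [hasAcutePair_image_coroot (by positivity)]) L hκ'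
  rw [show 2 * (4 / (2 * N)) = 4 / N by field_simp, card_filter_image_coroot (by positivity),
    card_filter_image_coroot N_pos.ne', card_filter_image_coroot_eq_zero, span_image_coroot]
    at bound
  rwa [add_comm]

end HasTwoLengths

lemma card_add_card_filter_inner_pos {Z : Finset E} (hZ : ∀ γ ∈ Z, -γ ∈ Z) (α : E) :
    2 * (Z.filter (0 < ⟪α, ·⟫_ℝ)).card + (Z.filter (⟪α, ·⟫_ℝ = 0)).card = Z.card := by
  have neg_card : (Z.filter (⟪α, ·⟫_ℝ < 0)).card = (Z.filter (0 < ⟪α, ·⟫_ℝ)).card := by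
    refine Finset.card_nbij' Neg.neg Neg.neg ?_ ?_ (fun γ _ => neg_neg γ) fun γ _ => neg_neg γ
    all_goals
      intro γ hγ
      obtain ⟨hγ, sign⟩ := Finset.mem_filter.mp hγ
      exact Finset.mem_filter.mpr ⟨hZ γ hγ, by rw [inner_neg_right]; linarith⟩
  have split := Finset.card_filter_add_card_filter_not (s := Z) (0 < ⟪α, ·⟫_ℝ)
  have split' := Finset.card_filter_add_card_filter_not (s := Z.filter (¬0 < ⟪α, ·⟫_ℝ))
    (⟪α, ·⟫_ℝ = 0)
  rw [Finset.filter_filter, Finset.filter_filter] at split'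
  have zero : (Z.filter fun γ => ¬0 < ⟪α, γ⟫_ℝ ∧ ⟪α, γ⟫_ℝ = 0) = Z.filter (⟪α, ·⟫_ℝ = 0) :=
    Finset.filter_congr fun γ _ => and_iff_right_of_imp fun eq => eq.not_gt
  have neg : (Z.filter fun γ => ¬0 < ⟪α, γ⟫_ℝ ∧ ¬⟪α, γ⟫_ℝ = 0) = Z.filter (⟪α, ·⟫_ℝ < 0) :=
    Finset.filter_congr fun γ _ => by rw [not_lt, ← lt_iff_le_and_ne]
  rw [zero, neg] at split'
  omega

-- The ray from `α` towards `β` meets the sphere through `α` only once more.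
lemma eq_of_smul_sub_eq_smul_sub {β' : E} (hβ : ⟪β, β⟫_ℝ = ⟪α, α⟫_ℝ) (hβ' : ⟪β', β'⟫_ℝ = ⟪α, α⟫_ℝ)
    (ne : β ≠ α) {c c' : ℝ} (hc : 0 < c) (hc' : 0 < c') (eq : c • (α - β) = c' • (α - β')) :
    β = β' := by
  have sub_eq : α - β' = (c / c') • (α - β) := by
    rw [div_eq_inv_mul, mul_smul, eq, smul_smul, inv_mul_cancel₀ hc'.ne', one_smul]
  have inner_sub {γ : E} (hγ : ⟪γ, γ⟫_ℝ = ⟪α, α⟫_ℝ) : ⟪α - γ, α - γ⟫_ℝ = 2 * ⟪α, α - γ⟫_ℝ := by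
    rw [real_inner_sub_sub_self, inner_sub_right, hγ]
    ring
  have eq' := inner_sub hβ'
  rw [sub_eq, real_inner_smul_left, real_inner_smul_right, real_inner_smul_right] at eq'
  have pos : 0 < ⟪α - β, α - β⟫_ℝ := real_inner_self_pos.mpr (sub_ne_zero.mpr ne.symm)
  have one : c / c' = 1 := mul_right_cancel₀ (mul_pos (div_pos hc hc') pos).ne'
    (by linear_combination eq' - c / c' * inner_sub hβ)
  rw [one, one_smul] at sub_eq
  exact (sub_right_injective sub_eq).symm

/-- The difference of any two orthogonal roots of squared length `M` is a positive multiple of a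
root. -/
def HasOrthogonalDifferences (Φ : Finset E) (M : ℝ) : Prop :=
  ∀ α ∈ Φ, ∀ β ∈ Φ, ⟪α, α⟫_ℝ = M → ⟪β, β⟫_ℝ = M → ⟪α, β⟫_ℝ = 0 → ∃ c : ℝ, 0 < c ∧ c • (α - β) ∈ Φ

namespace HasOrthogonalDifferences

variable {M : ℝ} {κ : T}

lemma exists_smul_sub_mem (h : HasOrthogonalDifferences Φ M) (hΦ : IsEuclideanRootSystem Φ)
    (hα : α ∈ Φ) (hβ : β ∈ Φ) (α_norm : ⟪α, α⟫_ℝ = M) (β_norm : ⟪β, β⟫_ℝ = M) (ne : β ≠ α)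
    (lt : -M < 2 * ⟪α, β⟫_ℝ) : ∃ c : ℝ, 0 < c ∧ c • (α - β) ∈ Φ ∧ 0 < ⟪α, c • (α - β)⟫_ℝ := by
  have M_pos := α_norm ▸ hΦ.inner_self_pos hα
  suffices ⟪α, β⟫_ℝ < M ∧ ∃ c : ℝ, 0 < c ∧ c • (α - β) ∈ Φ by
    obtain ⟨lt, c, hc, mem⟩ := this
    refine ⟨c, hc, mem, ?_⟩
    rw [real_inner_smul_right, inner_sub_right, α_norm]
    exact mul_pos hc (sub_pos.mpr lt)
  rcases hΦ.inner_cases hα hβ (α_norm.trans β_norm.symm).le with eq | rfl | zero | acute | obtuse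
  · exact absurd eq ne
  · rw [inner_neg_right] at lt
    linarith
  · exact ⟨by linarith, h α hα β hβ α_norm β_norm zero⟩
  · exact ⟨by linarith, 1, one_pos, by
      rw [one_smul]
      exact hΦ.sub_mem hβ hα (by rw [real_inner_comm, acute])⟩
  · linarith

lemma card_le_card_filter_inner_pos (h : HasOrthogonalDifferences Φ M)
    (hΦ : IsEuclideanRootSystem Φ) {S W : Finset E} (hα : α ∈ Φ) (α_norm : ⟪α, α⟫_ℝ = M)
    (hαS : α ∉ S) (hS : ∀ β ∈ S, β ∈ Φ ∧ ⟪β, β⟫_ℝ = M ∧ -M < 2 * ⟪α, β⟫_ℝ)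
    (hW : ∀ β ∈ S, ∀ c : ℝ, c • (α - β) ∈ Φ → c • (α - β) ∈ W) :
    S.card ≤ (W.filter (0 < ⟪α, ·⟫_ℝ)).card := by
  have ne {β : E} (hβ : β ∈ S) : β ≠ α := ne_of_mem_of_not_mem hβ hαS
  choose! c c_pos c_mem inner_pos using fun β (hβ : β ∈ S) =>
    h.exists_smul_sub_mem hΦ hα (hS β hβ).1 α_norm (hS β hβ).2.1 (ne hβ) (hS β hβ).2.2
  refine Finset.card_le_card_of_injOn (fun β => c β • (α - β))
    (fun β hβ => Finset.mem_filter.mpr ⟨hW β hβ _ (c_mem β hβ), inner_pos β hβ⟩)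
    fun β hβ β' hβ' eq => ?_
  exact eq_of_smul_sub_eq_smul_sub ((hS β hβ).2.1.trans α_norm.symm)
    ((hS β' hβ').2.1.trans α_norm.symm) (ne hβ) (c_pos β hβ) (c_pos β' hβ') eq

-- Three roots of squared length `M` at pairwise angle `2π/3` sum to zero, so that `L` cannot take
-- the same nonzero value on them.
lemma neg_lt_two_mul_inner {β' : E} {L : E →ₗ[ℝ] T} (hκ : κ ≠ 0) (α_norm : ⟪α, α⟫_ℝ = M)
    (β_norm : ⟪β, β⟫_ℝ = M) (β'_norm : ⟪β', β'⟫_ℝ = M) (Lα : L α = κ) (Lβ : L β = κ)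
    (Lβ' : L β' = κ) (αβ : 2 * ⟪α, β⟫_ℝ = -M) (αβ' : 2 * ⟪α, β'⟫_ℝ = -M) :
    -M < 2 * ⟪β, β'⟫_ℝ := by
  by_contra! le
  have sum_eq_zero : α + β + β' = 0 := by
    refine inner_self_eq_zero.mp (le_antisymm (?_ : ⟪α + β + β', α + β + β'⟫_ℝ ≤ 0)
      real_inner_self_nonneg)
    rw [real_inner_add_add_self, real_inner_add_add_self, inner_add_left]
    linarith
  have := congrArg L sum_eq_zero
  rw [map_add, map_add, Lα, Lβ, Lβ', map_zero] at this
  exact hκ ((smul_eq_zero.mp (show (3 : ℝ) • κ = 0 by rw [← this]; module)).resolve_left (by simp))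

lemma two_mul_card_obtuse_le (h : HasOrthogonalDifferences Φ M) (hΦ : IsEuclideanRootSystem Φ)
    (L : E →ₗ[ℝ] T) (hκ : κ ≠ 0) (α_norm : ⟪α, α⟫_ℝ = M) (Lα : L α = κ) :
    2 * (Φ.filter fun β => (⟪β, β⟫_ℝ = M ∧ L β = κ) ∧ 2 * ⟪α, β⟫_ℝ = -M).card ≤
      ((Φ.filter (L · = 0)).filter (⟪α, ·⟫_ℝ = 0)).card + 2 := by
  set A := Φ.filter fun β => (⟪β, β⟫_ℝ = M ∧ L β = κ) ∧ 2 * ⟪α, β⟫_ℝ = -M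
  obtain empty | ⟨β, hβA⟩ := A.eq_empty_or_nonempty
  · simp [empty]
  obtain ⟨hβ, ⟨β_norm, Lβ⟩, αβ⟩ := Finset.mem_filter.mp hβA
  have bound := h.card_le_card_filter_inner_pos hΦ hβ β_norm (Finset.notMem_erase β A)
    (W := (Φ.filter (L · = 0)).filter (⟪α, ·⟫_ℝ = 0)) (fun β' hβ' => by
      obtain ⟨hβ', ⟨β'_norm, Lβ'⟩, αβ'⟩ := Finset.mem_filter.mp (Finset.mem_of_mem_erase hβ')
      exact ⟨hβ', β'_norm, neg_lt_two_mul_inner hκ α_norm β_norm β'_norm Lα Lβ Lβ' αβ αβ'⟩)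
    fun β' hβ' c mem => by
      obtain ⟨-, ⟨-, Lβ'⟩, αβ'⟩ := Finset.mem_filter.mp (Finset.mem_of_mem_erase hβ')
      refine Finset.mem_filter.mpr ⟨Finset.mem_filter.mpr ⟨mem, ?_⟩, ?_⟩
      · rw [map_smul, map_sub, Lβ, Lβ', sub_self, smul_zero]
      · rw [real_inner_smul_right, inner_sub_right, (by linarith : ⟪α, β⟫_ℝ = ⟪α, β'⟫_ℝ), sub_self,
          mul_zero]
  have symm := card_add_card_filter_inner_pos (Z := (Φ.filter (L · = 0)).filter (⟪α, ·⟫_ℝ = 0))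
    (fun γ hγ => by
      simp only [Finset.mem_filter, map_neg, neg_eq_zero, inner_neg_right] at hγ ⊢
      exact ⟨⟨hΦ.neg_mem hγ.1.1, hγ.1.2⟩, hγ.2⟩) β
  have := Finset.card_erase_add_one hβA
  omega

lemma two_mul_card_le (h : HasOrthogonalDifferences Φ M) (hΦ : IsEuclideanRootSystem Φ)
    (L : E →ₗ[ℝ] T) (hκ : κ ≠ 0) :
    2 * (Φ.filter fun α => ⟪α, α⟫_ℝ = M ∧ L α = κ).card ≤ (Φ.filter (L · = 0)).card + 4 := by
  set Q := Φ.filter fun α => ⟪α, α⟫_ℝ = M ∧ L α = κ with Q_def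
  obtain empty | ⟨α, hαQ⟩ := Q.eq_empty_or_nonempty
  · simp [empty]
  obtain ⟨hα, α_norm, Lα⟩ := Finset.mem_filter.mp hαQ
  have α_pos := hΦ.inner_self_pos hα
  have bound := h.card_le_card_filter_inner_pos hΦ hα α_norm
    (S := (Q.filter (-M < 2 * ⟪α, ·⟫_ℝ)).erase α) (W := Φ.filter (L · = 0))
    (Finset.notMem_erase _ _) (fun β hβ => by
      obtain ⟨hβ, lt⟩ := Finset.mem_filter.mp (Finset.mem_of_mem_erase hβ)
      obtain ⟨hβ, β_norm, -⟩ := Finset.mem_filter.mp hβ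
      exact ⟨hβ, β_norm, lt⟩)
    fun β hβ c mem => by
      have Lβ := (Finset.mem_filter.mp (Finset.mem_filter.mp (Finset.mem_of_mem_erase hβ)).1).2.2
      exact Finset.mem_filter.mpr ⟨mem, by rw [map_smul, map_sub, Lα, Lβ, sub_self, smul_zero]⟩
  have obtuse_eq : Q.filter (¬-M < 2 * ⟪α, ·⟫_ℝ) = Q.filter (2 * ⟪α, ·⟫_ℝ = -M) := by
    refine Finset.filter_congr fun β hβ => ⟨fun le => ?_, fun eq => eq.not_gt⟩
    obtain ⟨hβ, β_norm, Lβ⟩ := Finset.mem_filter.mp hβ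
    rcases hΦ.inner_cases hα hβ (α_norm.trans β_norm.symm).le with rfl | rfl | h₀ | h₀ | h₀
    · linarith
    · rw [map_neg, Lα, neg_eq_iff_add_eq_zero, ← two_smul ℝ] at Lβ
      exact absurd ((smul_eq_zero.mp Lβ).resolve_left two_ne_zero) hκ
    all_goals linarith
  have obtuse := h.two_mul_card_obtuse_le hΦ L hκ α_norm Lα
  rw [← Finset.filter_filter, ← Q_def, ← obtuse_eq] at obtuse
  have split := Finset.card_filter_add_card_filter_not (s := Q) (-M < 2 * ⟪α, ·⟫_ℝ)
  have erase := Finset.card_erase_add_one (s := Q.filter (-M < 2 * ⟪α, ·⟫_ℝ)) (a := α)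
    (Finset.mem_filter.mpr ⟨hαQ, by linarith⟩)
  have symm := card_add_card_filter_inner_pos (Z := Φ.filter (L · = 0)) (fun γ hγ => by
    simp only [Finset.mem_filter, map_neg, neg_eq_zero] at hγ ⊢
    exact ⟨hΦ.neg_mem hγ.1, hγ.2⟩) α
  omega

end HasOrthogonalDifferences

lemma IsEuclideanRootSystem.sq_two_mul_inner_le (hΦ : IsEuclideanRootSystem Φ) (hα : α ∈ Φ)
    (hβ : β ∈ Φ) (h : ⟪α, α⟫_ℝ = ⟪β, β⟫_ℝ) (ne : β ≠ α) (ne_neg : β ≠ -α) :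
    (2 * ⟪α, β⟫_ℝ) ^ 2 ≤ ⟪β, β⟫_ℝ ^ 2 := by
  rcases hΦ.inner_cases hα hβ h.le with eq | eq | eq | eq | eq
  · exact absurd eq ne
  · exact absurd eq ne_neg
  · rw [eq, mul_zero, zero_pow two_ne_zero]
    exact sq_nonneg _
  · rw [eq]
  · rw [eq, neg_sq]

lemma IsEuclideanRootSystem.notMem_span_triple {e g k x : E} (hΦ : IsEuclideanRootSystem Φ)
    (he : e ∈ Φ) (hg : g ∈ Φ) (hk : k ∈ Φ) (e_norm : ⟪e, e⟫_ℝ = N) (g_norm : ⟪g, g⟫_ℝ = N)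
    (k_norm : ⟪k, k⟫_ℝ = N) (eg : ⟪e, g⟫_ℝ = 0) (ek : ⟪e, k⟫_ℝ = 0) (gk : ⟪g, k⟫_ℝ = 0)
    (hx : x ∈ Φ) (x_norm : ⟪x, x⟫_ℝ = N) (ex : 2 * ⟪e, x⟫_ℝ = N) :
    x ∉ span ℝ ({e, g, k} : Set E) := by
  have N_pos : 0 < N := e_norm ▸ hΦ.inner_self_pos he
  have sq_le {f : E} (hf : f ∈ Φ) (f_norm : ⟪f, f⟫_ℝ = N) (ef : ⟪e, f⟫_ℝ = 0) :
      (2 * ⟪f, x⟫_ℝ) ^ 2 ≤ N ^ 2 := by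
    refine x_norm ▸ hΦ.sq_two_mul_inner_le hf hx (f_norm.trans x_norm.symm) ?_ ?_ <;> rintro rfl
    · linarith
    · rw [inner_neg_right] at ex
      linarith
  intro mem
  obtain ⟨a, b, c, rfl⟩ := Submodule.mem_span_triple.mp mem
  have g_le := sq_le hg g_norm eg
  have k_le := sq_le hk k_norm ek
  simp only [inner_add_left, inner_add_right, real_inner_smul_left, real_inner_smul_right,
    real_inner_comm e, real_inner_comm g k, e_norm, g_norm, k_norm, eg, ek, gk]
    at ex x_norm g_le k_le
  have : 4 * N ^ 2 ≤ 3 * N ^ 2 := by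
    linear_combination (-4 * N) * x_norm + (2 * a * N + N) * ex + g_le + k_le
  linarith [pow_pos N_pos 2]

namespace HasTwoLengths

variable {κ₁ κ₂ : T}

lemma hasOrthogonalDifferences_short (h : HasTwoLengths Φ N 2)
    (h60 : HasAcutePair Φ N → HasAcutePair Φ (2 * N)) : HasOrthogonalDifferences Φ N :=
  fun α hα β hβ α_norm β_norm αβ => ⟨1, one_pos, by
    rw [one_smul, ← h.isEuclideanRootSystem.add_mem_iff_sub_mem hβ αβ]
    exact h.add_mem_of_inner_eq_zero h60 hα α_norm hβ β_norm αβ⟩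

lemma hasOrthogonalDifferences_long (h : HasTwoLengths Φ N 2)
    (h60 : HasAcutePair Φ (2 * N) → HasAcutePair Φ N) : HasOrthogonalDifferences Φ (2 * N) := by
  intro α hα β hβ α_norm β_norm αβ
  have N_pos := h.pos
  have dual : HasOrthogonalDifferences (Φ.image coroot) (4 / (2 * N)) :=
    h.image_coroot.hasOrthogonalDifferences_short (by
      rwa [hasAcutePair_image_coroot (by positivity), show 2 * (4 / (2 * N)) = 4 / N by field_simp,
        hasAcutePair_image_coroot N_pos.ne'])
  obtain ⟨c, c_pos, hc⟩ := dual _ (Finset.mem_image_of_mem _ hα) _ (Finset.mem_image_of_mem _ hβ)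
    (inner_self_coroot_eq_iff.mpr α_norm) (inner_self_coroot_eq_iff.mpr β_norm)
    (by rw [inner_coroot_coroot, αβ]; simp)
  rw [mem_image_coroot] at hc
  have sub_eq : coroot α - coroot β = (2 / (2 * N)) • (α - β) := by
    rw [coroot, coroot, α_norm, β_norm, smul_sub]
  have inner_pos : 0 < ⟪α - β, α - β⟫_ℝ := by
    rw [real_inner_sub_sub_self, α_norm, β_norm, αβ]
    linarith
  rw [sub_eq, smul_smul, coroot_smul, coroot, smul_smul] at hc
  exact ⟨_, by positivity, hc⟩

lemma four_le_finrank_span (h : HasTwoLengths Φ N 2) (hlong : HasAcutePair Φ (2 * N))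
    (hshort : HasAcutePair Φ N) : 4 ≤ finrank ℝ (span ℝ (Φ : Set E)) := by
  have hΦ := h.isEuclideanRootSystem
  have N_pos := h.pos
  obtain ⟨e, he, e_norm⟩ := h.exists_short
  obtain ⟨g, hg, k, hk, g_norm, k_norm, eg, ek, gk, -⟩ := h.exists_orthogonal_triple hlong he e_norm
  obtain ⟨x, hx, x_norm, ex⟩ := hshort.exists_of_inner_self_eq hΦ h.isIndecomposable he e_norm
  have x_notMem := hΦ.notMem_span_triple he hg hk e_norm g_norm k_norm eg ek gk hx x_norm ex
  have ne {σ τ : E} (σ_norm : ⟪σ, σ⟫_ℝ = N) (στ : ⟪σ, τ⟫_ℝ = 0) : σ ≠ τ := by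
    rintro rfl
    exact N_pos.ne' (σ_norm.symm.trans στ)
  have F_sub : (({e, g, k} : Finset E) : Set E) ⊆ Φ := by
    simp [Set.insert_subset_iff, he, hg, hk]
  have three : ({e, g, k} : Finset E).card = 3 :=
    Finset.card_eq_three.mpr ⟨e, g, k, ne e_norm eg, ne e_norm ek, ne g_norm gk, rfl⟩
  have lt : span ℝ (({e, g, k} : Finset E) : Set E) < span ℝ (Φ : Set E) :=
    lt_of_le_of_ne (Submodule.span_mono F_sub) fun eq => x_notMem (by
      simpa [← eq] using Submodule.subset_span (R := ℝ) hx)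
  have rank := card_le_finrank_span (Φ := {e, g, k}) (mt (@F_sub 0) hΦ.zero_notMem) (by
    simp only [Finset.mem_insert, Finset.mem_singleton]
    rintro _ (rfl | rfl | rfl) _ (rfl | rfl | rfl) ne
    all_goals first
      | exact absurd rfl ne
      | assumption
      | rwa [real_inner_comm])
  have := Submodule.finrank_lt_finrank_of_lt lt
  omega

lemma card_add_card_le_of_two (h : HasTwoLengths Φ N 2) (L : E →ₗ[ℝ] T)
    (hκ : LinearIndependent ℝ ![κ₁, κ₂]) :
    (Φ.filter fun α => ⟪α, α⟫_ℝ = N ∧ L α = κ₁).card +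
      (Φ.filter fun α => ⟪α, α⟫_ℝ = 2 * N ∧ L α = κ₂).card ≤
        (Φ.filter (L · = 0)).card + finrank ℝ (span ℝ (Φ : Set E)) := by
  by_cases hshort : HasAcutePair Φ N
  swap
  · exact h.card_add_card_le_of_not_hasAcutePair_short hshort L hκ
  by_cases hlong : HasAcutePair Φ (2 * N)
  swap
  · exact h.card_add_card_le_of_not_hasAcutePair_long hlong L hκ
  have short := (h.hasOrthogonalDifferences_short fun _ => hlong).two_mul_card_le
    h.isEuclideanRootSystem L (κ := κ₁) (hκ.ne_zero 0)
  have long := (h.hasOrthogonalDifferences_long fun _ => hshort).two_mul_card_le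
    h.isEuclideanRootSystem L (κ := κ₂) (hκ.ne_zero 1)
  have rank := h.four_le_finrank_span hlong hshort
  omega

end HasTwoLengths

end TwoLengths

namespace HasTwoLengths

variable {N r : ℝ} {T : Type*} [AddCommGroup T] [Module ℝ T]

lemma card_filter_apply_eq_le (h : HasTwoLengths Φ N r) (L : E →ₗ[ℝ] T) {κ : E → T}
    (κ_eq : ∀ α ∈ Φ, ∀ β ∈ Φ, ⟪β, β⟫_ℝ = ⟪α, α⟫_ℝ → κ β = κ α) {e f : E} (he : e ∈ Φ)
    (e_norm : ⟪e, e⟫_ℝ = N) (hf : f ∈ Φ) (f_norm : ⟪f, f⟫_ℝ = r * N) :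
    (Φ.filter fun α => L α = κ α).card ≤
      (Φ.filter fun α => ⟪α, α⟫_ℝ = N ∧ L α = κ e).card +
        (Φ.filter fun α => ⟪α, α⟫_ℝ = r * N ∧ L α = κ f).card := by
  refine (Finset.card_le_card fun α hα => ?_).trans (Finset.card_union_le _ _)
  obtain ⟨hα, α_eq⟩ := Finset.mem_filter.mp hα
  rw [Finset.mem_union, Finset.mem_filter, Finset.mem_filter]
  refine (h.inner_self α hα).imp (fun norm => ⟨hα, norm, ?_⟩) fun norm => ⟨hα, norm, ?_⟩
  · rw [α_eq, κ_eq e he α hα (norm.trans e_norm.symm)]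
  · rw [α_eq, κ_eq f hf α hα (norm.trans f_norm.symm)]

end HasTwoLengths

lemma IsEuclideanRootSystem.card_filter_apply_eq_le_of_isIndecomposable
    (hΦ : IsEuclideanRootSystem Φ) (hΦ' : IsIndecomposable Φ)
    {T : Type*} [AddCommGroup T] [Module ℝ T] (L : E →ₗ[ℝ] T) {κ : E → T}
    (κ_reflection : ∀ α ∈ Φ, ∀ β ∈ Φ, κ ((ℝ ∙ α)ᗮ.reflection β) = κ β)
    (κ_ne_zero : ∀ α ∈ Φ, κ α ≠ 0)
    (κ_indep : ∀ α ∈ Φ, ∀ β ∈ Φ, ⟪α, α⟫_ℝ ≠ ⟪β, β⟫_ℝ → LinearIndependent ℝ ![κ α, κ β]) :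
    (Φ.filter fun α => L α = κ α).card ≤
      (Φ.filter (L · = 0)).card + finrank ℝ (span ℝ (Φ : Set E)) := by
  have κ_eq (α) (hα : α ∈ Φ) (β) (hβ : β ∈ Φ) (norm : ⟪β, β⟫_ℝ = ⟪α, α⟫_ℝ) : κ β = κ α :=
    hΦ.of_inner_self_eq hΦ' (p := fun γ => κ γ = κ α)
      (fun σ hσ τ hτ => (κ_reflection σ hσ τ hτ).trans) hα rfl hβ norm
  have two_lengths {N r : ℝ} (hr : r ≠ 1) (h : HasTwoLengths Φ N r)
      (le : ∀ {κ₁ κ₂ : T}, LinearIndependent ℝ ![κ₁, κ₂] →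
        (Φ.filter fun α => ⟪α, α⟫_ℝ = N ∧ L α = κ₁).card +
          (Φ.filter fun α => ⟪α, α⟫_ℝ = r * N ∧ L α = κ₂).card ≤
            (Φ.filter (L · = 0)).card + finrank ℝ (span ℝ (Φ : Set E))) :
      (Φ.filter fun α => L α = κ α).card ≤
        (Φ.filter (L · = 0)).card + finrank ℝ (span ℝ (Φ : Set E)) := by
    obtain ⟨e, he, e_norm⟩ := h.exists_short
    obtain ⟨f, hf, f_norm⟩ := h.exists_long
    refine (h.card_filter_apply_eq_le L κ_eq he e_norm hf f_norm).trans (le (κ_indep e he f hf ?_))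
    rw [e_norm, f_norm]
    exact fun eq => hr (mul_right_cancel₀ h.pos.ne' (by rw [← eq, one_mul]))
  rcases hΦ.eq_or_hasTwoLengths hΦ' with norm_eq | ⟨N, h | h⟩
  · rcases Φ.eq_empty_or_nonempty with rfl | ⟨α, hα⟩
    · simp
    rw [Finset.filter_congr fun β hβ => by rw [κ_eq α hα β hβ (norm_eq β hβ α hα)]]
    exact card_le_of_isIndecomposable hΦ hΦ' L (κ_ne_zero α hα)
  · exact two_lengths (by norm_num) h fun hκ => h.card_add_card_le_of_two L hκ
  · exact two_lengths (by norm_num) h fun hκ => h.card_add_card_le_of_three L hκ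

theorem IsEuclideanRootSystem.card_filter_apply_eq_le (hΦ : IsEuclideanRootSystem Φ)
    {T : Type*} [AddCommGroup T] [Module ℝ T] (L : E →ₗ[ℝ] T) {κ : E → T}
    (κ_reflection : ∀ α ∈ Φ, ∀ β ∈ Φ, κ ((ℝ ∙ α)ᗮ.reflection β) = κ β)
    (κ_ne_zero : ∀ α ∈ Φ, κ α ≠ 0)
    (κ_indep : ∀ α ∈ Φ, ∀ β ∈ Φ, ⟪α, α⟫_ℝ ≠ ⟪β, β⟫_ℝ → LinearIndependent ℝ ![κ α, κ β]) :
    (Φ.filter fun α => L α = κ α).card ≤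
      (Φ.filter (L · = 0)).card + finrank ℝ (span ℝ (Φ : Set E)) :=
  card_le_of_forall_isIndecomposable hΦ L κ fun _ sub hΨ hΨ' =>
    hΨ.card_filter_apply_eq_le_of_isIndecomposable hΨ' L
      (fun α hα β hβ => κ_reflection α (sub hα) β (sub hβ))
      (fun α hα => κ_ne_zero α (sub hα))
      fun α hα β hβ => κ_indep α (sub hα) β (sub hβ)

end EuclideanRootSystem

section RootPairing

open scoped InnerProductSpace
open Submodule (span)
open Module (finrank Dual)

variable {ι M N : Type*} [AddCommGroup M] [Module ℝ M] [AddCommGroup N] [Module ℝ N]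
  (P : RootPairing ι ℝ M N)

/-- The map of a real root pairing into Euclidean space whose coordinates are the pairings with the
coroots; it carries the canonical form `P.RootForm` to the inner product. -/
def corootEmbedding : M →ₗ[ℝ] EuclideanSpace ℝ ι :=
  (WithLp.linearEquiv 2 ℝ (ι → ℝ)).symm.toLinearMap ∘ₗ LinearMap.pi P.coroot'

lemma corootEmbedding_root_ne_zero (i : ι) : corootEmbedding P (P.root i) ≠ 0 := by
  intro h
  have := congrArg (· i) h
  simp [corootEmbedding] at this

lemma corootEmbedding_injective [P.IsRootSystem] : Function.Injective (corootEmbedding P) := by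
  rw [injective_iff_map_eq_zero]
  intro x hx
  have coroot_eq_zero (i : ι) : P.toLinearMap x (P.coroot i) = 0 := congrArg (· i) hx
  refine P.toLinearMap.toPerfPair.injective (LinearMap.ext_on_range
    (RootPairing.IsRootSystem.span_coroot_eq_top (P := P)) fun i => ?_)
  simp [coroot_eq_zero]

variable [Fintype ι]

lemma inner_corootEmbedding (x y : M) :
    ⟪corootEmbedding P x, corootEmbedding P y⟫_ℝ = P.RootForm x y := by
  simp [P.rootForm_apply_apply, PiLp.inner_apply, corootEmbedding, mul_comm]

lemma two_mul_inner_corootEmbedding (i : ι) (x : M) :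
    2 * ⟪corootEmbedding P (P.root i), corootEmbedding P x⟫_ℝ =
      P.coroot' i x * ⟪corootEmbedding P (P.root i), corootEmbedding P (P.root i)⟫_ℝ := by
  have := P.rootForm_reflection_reflection_apply i (P.root i) x
  rw [P.reflection_apply_self, P.reflection_apply, map_neg, LinearMap.neg_apply, map_sub, map_smul,
    smul_eq_mul] at this
  rw [inner_corootEmbedding, inner_corootEmbedding]
  linarith

lemma corootEmbedding_reflection (i : ι) (x : M) :
    (ℝ ∙ corootEmbedding P (P.root i))ᗮ.reflection (corootEmbedding P x) =
      corootEmbedding P (P.reflection i x) := by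
  rw [reflection_eq_sub_smul (two_mul_inner_corootEmbedding P i x), P.reflection_apply, map_sub,
    map_smul]

variable [P.IsRootSystem] [P.IsCrystallographic] [P.IsReduced]

lemma isEuclideanRootSystem_corootEmbedding (X : Submodule ℝ M) :
    IsEuclideanRootSystem
      ((Finset.univ.filter (P.root · ∈ X)).image (corootEmbedding P ∘ P.root)) := by
  refine ⟨?_, ?_, ?_, ?_⟩
  · simp [corootEmbedding_root_ne_zero]
  · simp only [Finset.mem_image, Finset.mem_filter_univ]
    rintro _ ⟨i, hi, rfl⟩ _ ⟨j, hj, rfl⟩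
    refine ⟨P.reflectionPerm i j, ?_, ?_⟩
    · rw [P.root_reflectionPerm, P.reflection_apply]
      exact X.sub_mem hj (X.smul_mem _ hi)
    · simp [corootEmbedding_reflection]
  · simp only [Finset.mem_image, Finset.mem_filter_univ]
    rintro _ ⟨i, -, rfl⟩ _ ⟨j, -, rfl⟩
    obtain ⟨z, hz⟩ := P.exists_value (S := ℤ) j i
    refine ⟨z, (two_mul_inner_corootEmbedding P i (P.root j)).trans ?_⟩
    simp [← hz]
  · simp only [Finset.mem_image, Finset.mem_filter_univ]
    rintro _ ⟨i, -, rfl⟩ c ⟨j, -, hj⟩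
    rw [Function.comp_apply, Function.comp_apply, ← map_smul] at hj
    replace hj := corootEmbedding_injective P hj
    have dep : ¬LinearIndependent ℝ ![P.root i, P.root j] := fun h =>
      (LinearIndependent.pair_iff' (P.ne_zero i)).mp h c hj.symm
    refine (RootPairing.IsReduced.eq_or_eq_neg i j dep).imp (fun h => ?_) fun h => ?_
    · exact smul_left_injective ℝ (P.ne_zero i) (by simp [← hj, ← h])
    · exact smul_left_injective ℝ (P.ne_zero i) (by simp [← hj, ← neg_eq_iff_eq_neg.mpr h])

lemma card_filter_root_mem_le [FiniteDimensional ℝ M]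
    {T : Type*} [AddCommGroup T] [Module ℝ T] (L : M →ₗ[ℝ] T) {κ : ι → T}
    (κ_reflectionPerm : ∀ i j, κ (P.reflectionPerm i j) = κ j) (κ_ne_zero : ∀ i, κ i ≠ 0)
    (κ_indep : ∀ i j, P.RootForm (P.root i) (P.root i) ≠ P.RootForm (P.root j) (P.root j) →
      LinearIndependent ℝ ![κ i, κ j]) (X : Submodule ℝ M) :
    (Finset.univ.filter fun i => P.root i ∈ X ∧ L (P.root i) = κ i).card ≤
      (Finset.univ.filter fun i => L (P.root i) = 0).card + finrank ℝ X := by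
  have inj : Function.Injective (corootEmbedding P ∘ P.root) :=
    (corootEmbedding_injective P).comp P.root.injective
  obtain ⟨g, hg⟩ := LinearMap.exists_leftInverse_of_injective _
    (LinearMap.ker_eq_bot.mpr (corootEmbedding_injective P))
  have g_apply (x : M) : g (corootEmbedding P x) = x := LinearMap.congr_fun hg x
  set κ' := Function.extend (corootEmbedding P ∘ P.root) κ 0
  have κ'_apply (i : ι) : κ' (corootEmbedding P (P.root i)) = κ i := inj.extend_apply κ 0 i
  have bound := (isEuclideanRootSystem_corootEmbedding P X).card_filter_apply_eq_le (L ∘ₗ g)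
    (κ := κ') ?_ ?_ ?_
  · rw [Finset.filter_image, Finset.filter_image, Finset.card_image_of_injective _ inj,
      Finset.card_image_of_injective _ inj, Finset.filter_filter, Finset.filter_filter] at bound
    simp only [Function.comp_apply, LinearMap.comp_apply, g_apply, κ'_apply] at bound
    refine bound.trans (Nat.add_le_add (Finset.card_le_card ?_) ?_)
    · exact Finset.monotone_filter_right _ fun i _ h => h.2
    · refine (Submodule.finrank_mono (Submodule.span_le.mpr fun x hx => ?_)).trans
        (X.finrank_map_le (corootEmbedding P))
      obtain ⟨i, hi, rfl⟩ := Finset.mem_image.mp hx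
      exact Submodule.mem_map_of_mem ((Finset.mem_filter_univ i).mp hi)
  all_goals simp only [Finset.forall_mem_image, Function.comp_apply, κ'_apply,
      corootEmbedding_reflection, ← P.root_reflectionPerm, inner_corootEmbedding]
  · exact fun i _ j _ => κ_reflectionPerm i j
  · exact fun i _ => κ_ne_zero i
  · exact fun i _ j _ => κ_indep i j

lemma span_root_image_eq_top [FiniteDimensional ℝ M] {T : Type*} [AddCommGroup T] [Module ℝ T]
    (L : M →ₗ[ℝ] T) {κ : ι → T} (κ_reflectionPerm : ∀ i j, κ (P.reflectionPerm i j) = κ j)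
    (κ_ne_zero : ∀ i, κ i ≠ 0)
    (κ_indep : ∀ i j, P.RootForm (P.root i) (P.root i) ≠ P.RootForm (P.root j) (P.root j) →
      LinearIndependent ℝ ![κ i, κ j])
    (le : (Finset.univ.filter fun i => L (P.root i) = 0).card + finrank ℝ M ≤
      (Finset.univ.filter fun i => L (P.root i) = κ i).card) :
    span ℝ (P.root '' {i | L (P.root i) = κ i}) = ⊤ := by
  set X := span ℝ (P.root '' {i | L (P.root i) = κ i})
  have bound := card_filter_root_mem_le P L κ_reflectionPerm κ_ne_zero κ_indep X
  have mem (i : ι) : P.root i ∈ X ∧ L (P.root i) = κ i ↔ L (P.root i) = κ i :=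
    and_iff_right_of_imp fun hi => Submodule.subset_span ⟨i, hi, rfl⟩
  simp only [mem] at bound
  exact Submodule.eq_top_of_finrank_eq
    (X.finrank_le.antisymm (Nat.le_of_add_le_add_left (le.trans bound)))

end RootPairing

lemma span_root_image_eq_rootSpan {ι K L M N : Type*} [Finite ι] [Field K] [Field L] [Algebra K L]
    [AddCommGroup M] [AddCommGroup N] [Module L M] [Module L N] [Module K M]
    [IsScalarTower K L M] (P : RootPairing ι L M N) [P.IsRootSystem]
    [P.IsValuedIn K] {s : Set ι} (hs : Submodule.span L (P.root '' s) = ⊤) :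
    Submodule.span K (P.root '' s) = P.rootSpan K := by
  let := Module.compHom N (algebraMap K L)
  have : IsScalarTower K L N := .of_algebraMap_smul fun _ _ => rfl
  have le : Submodule.span K (P.root '' s) ≤ P.rootSpan K :=
    Submodule.span_mono (Set.image_subset_range _ _)
  have : FiniteDimensional K (P.rootSpan K) := .span_of_finite K (Set.finite_range P.root)
  refine Submodule.eq_of_le_of_finrank_eq le ?_
  rw [P.finrank_rootSpanIn K]
  refine LinearMap.finrank_eq_of_isPerfPair P.toLinearMap _ (P.corootSpan K) ?_ ?_ ?_
  · rw [Submodule.span_span_of_tower, hs]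
  · rw [Submodule.span_span_of_tower]
    exact RootPairing.IsRootSystem.span_coroot_eq_top
  · exact fun x hx => P.toLinearMap_apply_apply_mem_range_algebraMap K x (le hx)

namespace RedRootSystem

open Module (Dual)

lemma coroot_injOn : Set.InjOn rs.coroot rs.roots := by
  intro α hα β hβ eq
  have := IsAddTorsionFree.of_isTorsionFree ℝ (Dual ℝ V)
  have reflect_mem {γ : Dual ℝ V} (hγ : γ ∈ rs.roots) :
      Set.MapsTo (Module.preReflection γ (Dual.eval ℝ V (rs.coroot γ))) rs.roots rs.roots :=
    fun δ hδ => rs.reflect_mem γ hγ δ hδ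
  have two_α : Dual.eval ℝ V (rs.coroot α) α = 2 := rs.coroot_two α hα
  have two_β : Dual.eval ℝ V (rs.coroot β) β = 2 := rs.coroot_two β hβ
  exact Module.eq_of_mapsTo_reflection_of_mem rs.roots.finite_toSet two_α two_β (eq ▸ two_α)
    (eq ▸ two_β) (reflect_mem hα) (reflect_mem hβ) hβ

variable [FiniteDimensional ℝ V]

/-- The root pairing between `Dual ℝ V` and `V` given by the roots and the coroots. -/
def rootPairing : RootPairing rs.roots ℝ (Dual ℝ V) V :=
  .mk'' LinearMap.id (.subtype _) ⟨_, rs.coroot_injOn.injective⟩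
    (fun α => rs.coroot_two α α.2)
    (fun α => by
      rintro _ ⟨β, rfl⟩
      exact ⟨⟨_, rs.reflect_mem α α.2 β β.2⟩, rfl⟩)
    (by simpa using rs.spanning)

@[simp]
lemma rootPairing_root (α : rs.roots) : rs.rootPairing.root α = α := rfl

lemma rootPairing_reflectionPerm (α β : rs.roots) :
    rs.rootPairing.reflectionPerm α β = ⟨_, rs.reflect_mem α α.2 β β.2⟩ :=
  Subtype.ext (rs.rootPairing.root_reflectionPerm α β)

instance : rs.rootPairing.IsRootSystem :=
  RootPairing.isRootSystem_mk'' fun α β => (rs.integral β β.2 α α.2).imp fun _ h => h.symm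

instance : rs.rootPairing.IsCrystallographic :=
  ⟨fun α β => (rs.integral β β.2 α α.2).imp fun _ h => h.symm⟩

instance : rs.rootPairing.IsReduced where
  eq_or_eq_neg α β dep := by
    rw [LinearIndependent.pair_iff' (rs.rootPairing.ne_zero α)] at dep
    push Not at dep
    obtain ⟨c, hc⟩ := dep
    simp only [rootPairing_root] at hc ⊢
    obtain rfl | rfl := rs.reduced α α.2 c (hc ▸ β.2)
    · exact .inl (by simp [← hc])
    · exact .inr (by simp [← hc])

end RedRootSystem

section Parameters

open Module (Dual finrank)

/-- The evaluation functional `k ↦ k β` on the space of parameter functions. -/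
def evalParam (β : rs.roots) : Dual ℝ (ParamSub rs) :=
  LinearMap.proj β ∘ₗ (ParamSub rs).subtype

lemma evalParam_apply (β : rs.roots) (k : ParamSub rs) :
    evalParam rs β k = (k : rs.roots → ℝ) β := rfl

lemma evalParam_ne_zero (β : rs.roots) : evalParam rs β ≠ 0 := fun h =>
  one_ne_zero (LinearMap.congr_fun h ⟨1, fun _ _ => rfl⟩ : (1 : ℝ) = 0)

lemma dense_setOf_apply_ne_zero {E : Type*} [NormedAddCommGroup E] [NormedSpace ℝ E]
    {f : Dual ℝ E} (hf : f ≠ 0) : Dense {x | f x ≠ 0} := by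
  refine interior_eq_empty_iff_dense_compl.mp (Set.not_nonempty_iff_eq_empty.mp fun h => hf ?_)
  exact LinearMap.ker_eq_top.mp (Submodule.eq_top_of_nonempty_interior' (LinearMap.ker f) h)

lemma exists_mem_forall_eq_zero_of_apply_eq_zero {ι E : Type*} [Finite ι] [NormedAddCommGroup E]
    [NormedSpace ℝ E] [FiniteDimensional ℝ E] {U : Set E} (hU : IsOpen U) (hU' : U.Nonempty)
    (f : ι → Dual ℝ E) : ∃ x ∈ U, ∀ i, f i x = 0 → f i = 0 := by
  have dense : Dense (⋂ i : {i // f i ≠ 0}, {x | f i x ≠ 0}) := dense_iInter_of_isOpen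
    (fun i => isOpen_ne.preimage (f i).continuous_of_finiteDimensional)
    fun i => dense_setOf_apply_ne_zero i.2
  obtain ⟨x, hxU, hx⟩ := dense.inter_open_nonempty U hU hU'
  exact ⟨x, hxU, fun i => not_imp_not.mp fun hi => Set.mem_iInter.mp hx ⟨i, hi⟩⟩

lemma IsGeneric.card_filter_eq {ξ : ParamSub rs →ₗ[ℝ] V} (hξ : IsGeneric rs ξ) :
    (Finset.univ.filter fun α : rs.roots => ξ.dualMap α = evalParam rs α).card =
      (Finset.univ.filter fun α : rs.roots => ξ.dualMap α = 0).card + finrank ℝ V := by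
  obtain ⟨U, hU, hU', residual⟩ := hξ
  obtain ⟨k, hk, generic⟩ := exists_mem_forall_eq_zero_of_apply_eq_zero hU hU'.nonempty
    (Sum.elim (fun α : rs.roots => ξ.dualMap α - evalParam rs α) fun α : rs.roots => ξ.dualMap α)
  have eq_evalParam (α : rs.roots) :
      ξ.dualMap α = evalParam rs α ↔ (α : Dual ℝ V) (ξ k) = (k : rs.roots → ℝ) α :=
    ⟨fun h => LinearMap.congr_fun h k,
      fun h => sub_eq_zero.mp (generic (.inl α) (sub_eq_zero.mpr h))⟩
  have eq_zero (α : rs.roots) : ξ.dualMap α = 0 ↔ (α : Dual ℝ V) (ξ k) = 0 :=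
    ⟨fun h => LinearMap.congr_fun h k, generic (.inr α)⟩
  simpa only [eq_evalParam, eq_zero, IsLinResidual, Set.ncard_eq_toFinset_card',
    Set.toFinset_ofPred] using residual k hk

variable [FiniteDimensional ℝ V]

lemma evalParam_reflectionPerm (α β : rs.roots) :
    evalParam rs (rs.rootPairing.reflectionPerm α β) = evalParam rs β := by
  ext k
  rw [rs.rootPairing_reflectionPerm]
  exact k.2 α β

lemma rootForm_sub_mem_ParamSub (a : ℝ) :
    (fun β : rs.roots => rs.rootPairing.RootForm (β : Dual ℝ V) β - a) ∈ ParamSub rs := fun α β =>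
  congrArg (· - a) (rs.rootPairing.rootForm_reflection_reflection_apply α β β)

lemma linearIndependent_evalParam {α β : rs.roots}
    (h : rs.rootPairing.RootForm (α : Dual ℝ V) α ≠ rs.rootPairing.RootForm (β : Dual ℝ V) β) :
    LinearIndependent ℝ ![evalParam rs α, evalParam rs β] := by
  rw [LinearIndependent.pair_iff' (evalParam_ne_zero rs α)]
  intro c hc
  set a := rs.rootPairing.RootForm (α : Dual ℝ V) α
  have eval := LinearMap.congr_fun hc ⟨_, rootForm_sub_mem_ParamSub rs a⟩
  simp only [LinearMap.smul_apply, evalParam_apply, a, sub_self, smul_zero] at eval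
  exact h (sub_eq_zero.mp eval.symm).symm

end Parameters

/-- Rationality of generic linear residual points:  for every root `α ∈ R1`, the linear
functional `k ↦ α(ξ(k))` on `K` is a linear combination with rational coefficients of
the evaluation functionals `k ↦ k(β)`, `β ∈ R1`. -/
theorem generic_residual_point_rational (V : Type*) [AddCommGroup V] [Module ℝ V]
    [FiniteDimensional ℝ V] (rs : RedRootSystem V)
    (ξ : (ParamSub rs) →ₗ[ℝ] V) (hξ : IsGeneric rs ξ) :
    ∀ α : rs.roots, ∃ c : rs.roots → ℚ, ∀ k : ParamSub rs,
      (α : Module.Dual ℝ V) (ξ k) = ∑ β : rs.roots, (c β : ℝ) * (k : rs.roots → ℝ) β := by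
  intro α
  have span_eq_top := span_root_image_eq_top rs.rootPairing ξ.dualMap (κ := evalParam rs)
    (evalParam_reflectionPerm rs) (evalParam_ne_zero rs)
    (fun _ _ => linearIndependent_evalParam rs)
    (by rw [Subspace.dual_finrank_eq]; exact (hξ.card_filter_eq rs).ge)
  have mem : (α : Module.Dual ℝ V) ∈ Submodule.span ℚ
      (rs.rootPairing.root '' {β | ξ.dualMap β = evalParam rs β}) :=
    (span_root_image_eq_rootSpan (K := ℚ) rs.rootPairing span_eq_top).ge
      (Submodule.subset_span ⟨α, rfl⟩)
  have mem_evalParam : ξ.dualMap α ∈ Submodule.span ℚ (Set.range (evalParam rs)) := by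
    refine Submodule.span_mono ?_
      (Submodule.apply_mem_span_image_of_mem_span (ξ.dualMap.restrictScalars ℚ) mem)
    rintro _ ⟨_, ⟨β, hβ, rfl⟩, rfl⟩
    exact ⟨β, hβ.symm⟩
  obtain ⟨c, hc⟩ := (Submodule.mem_span_range_iff_exists_fun ℚ).mp mem_evalParam
  refine ⟨c, fun k => ?_⟩
  simpa [evalParam_apply, Rat.smul_def] using (LinearMap.congr_fun hc k).symm

end GenRes

end
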